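/- arXiv:1204.4513 — 2 statements merged into one kernel-verified Lean document; each statement's English description precedes it below -/
import Mathlib

section
/- Let (R, 𝔪, k) be a commutative noetherian local ring. The following four conditions are equivalent: (i) R is an AB ring; (ii) AB-dim_R M < ∞ for every finitely generated R-module M; (iii) AB-dim_R L < ∞ for every finitely generated R-module L of finite length; (iv) R is Gorenstein and the class of finitely generated R-modules of finite AB-dimension is closed under extensions, i.e. for every short exact sequence 0 → A → B → C → 0 of finitely generated R-modules with AB-dim_R A < ∞ and AB-dim_R C < ∞, also AB-dim_R B < ∞. -/
open CategoryTheory IsLocalRing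

noncomputable section

universe u

variable (R : Type u) [CommRing R]

/-- The Ext group `Ext^n_R(M, N)` vanishes. -/
def ExtVanishes (M : Type u) [AddCommGroup M] [Module R M]
    (N : Type u) [AddCommGroup N] [Module R N] (n : ℕ) : Prop :=
  Subsingleton (((Ext R (ModuleCat.{u} R) n).obj
    (Opposite.op (ModuleCat.of R M))).obj (ModuleCat.of R N))

/-- `N ∈ M^⊥`, i.e. `Ext^n_R(M,N) = 0` for all sufficiently large `n`. -/
def MemPerp (M : Type u) [AddCommGroup M] [Module R M]
    (N : Type u) [AddCommGroup N] [Module R N] : Prop :=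
  ∃ d : ℕ, ∀ n ≥ d, ExtVanishes R M N n

/-- `P_R(M,N) = sup { n | Ext^n_R(M,N) ≠ 0 }`, an element of `{-∞} ∪ ℕ ∪ {∞}`;
it is `⊥ = -∞` when every `Ext^n_R(M,N)` vanishes. -/
def extP (M : Type u) [AddCommGroup M] [Module R M]
    (N : Type u) [AddCommGroup N] [Module R N] : WithBot ℕ∞ :=
  sSup {x : WithBot ℕ∞ | ∃ n : ℕ, ¬ ExtVanishes R M N n ∧ x = (n : ℕ∞)}

/-- `P_R(M) = sup { P_R(M,N) | N ∈ M^⊥ }`, the sup being taken over all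
finitely generated modules in `M^⊥`. -/
def extPsup (M : Type u) [AddCommGroup M] [Module R M] : WithBot ℕ∞ :=
  sSup {x : WithBot ℕ∞ | ∃ (N : Type u) (_ : AddCommGroup N) (_ : Module R N),
    Module.Finite R N ∧ MemPerp R M N ∧ x = extP R M N}

/-- A module `G` is totally reflexive if the biduality map `G → G**` is bijective and
`Ext^n_R(G,R) = 0 = Ext^n_R(G*,R)` for all `n > 0`. -/
def IsTotallyReflexive (G : Type u) [AddCommGroup G] [Module R G] : Prop :=
  Function.Bijective (Module.Dual.eval R G) ∧
    (∀ n > 0, ExtVanishes R G R n) ∧ (∀ n > 0, ExtVanishes R (Module.Dual R G) R n)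

/-- `G-dim_R M ≤ n`: there is a resolution of `M` of length `n` by finitely generated
totally reflexive modules. -/
def GdimLE : ℕ → ModuleCat.{u} R → Prop
  | 0, M => IsTotallyReflexive R M
  | n + 1, M => ∃ G : ModuleCat.{u} R, Module.Finite R G ∧ IsTotallyReflexive R G ∧
      ∃ f : G →ₗ[R] M, Function.Surjective f ∧ GdimLE n (ModuleCat.of R (LinearMap.ker f))

/-- The G-dimension of `M`, as an element of `ℕ∞`. -/
def gdim (M : Type u) [AddCommGroup M] [Module R M] : ℕ∞ :=
  sInf {x : ℕ∞ | ∃ n : ℕ, GdimLE R n (ModuleCat.of R M) ∧ x = n}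

/-- `pd_R M ≤ n`: there is a projective resolution of `M` of length `n` by finitely
generated projective modules. -/
def ProjDimLE : ℕ → ModuleCat.{u} R → Prop
  | 0, M => Module.Projective R M
  | n + 1, M => ∃ P : ModuleCat.{u} R, Module.Finite R P ∧ Module.Projective R P ∧
      ∃ f : P →ₗ[R] M, Function.Surjective f ∧ ProjDimLE n (ModuleCat.of R (LinearMap.ker f))

/-- The projective dimension of `M`, as an element of `ℕ∞`. -/
def projdim (M : Type u) [AddCommGroup M] [Module R M] : ℕ∞ :=
  sInf {x : ℕ∞ | ∃ n : ℕ, ProjDimLE R n (ModuleCat.of R M) ∧ x = n}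

/-- `injdim_R M ≤ n`: there is an injective resolution of `M` of length `n`. -/
def InjDimLE : ℕ → ModuleCat.{u} R → Prop
  | 0, M => Module.Injective R M
  | n + 1, M => ∃ I : ModuleCat.{u} R, Module.Injective R I ∧
      ∃ f : M →ₗ[R] I, Function.Injective f ∧
        InjDimLE n (ModuleCat.of R (I ⧸ LinearMap.range f))

/-- `R` is Gorenstein: `R` has finite injective dimension as a module over itself. -/
def IsGorensteinRing : Prop := ∃ n : ℕ, InjDimLE R n (ModuleCat.of R R)

/-- `AB-dim_R M = sup { G-dim_R M, P_R(M) }`. -/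
def abdim (M : Type u) [AddCommGroup M] [Module R M] : WithBot ℕ∞ :=
  max ((gdim R M : ℕ∞) : WithBot ℕ∞) (extPsup R M)

/-- The depth of `M`: the length of a maximal `M`-regular sequence contained in the
maximal ideal (expressed as the sup of lengths of such regular sequences). -/
def rdepth [IsLocalRing R] (M : Type u) [AddCommGroup M] [Module R M] : ℕ∞ :=
  sSup {x : ℕ∞ | ∃ rs : List R, (∀ r ∈ rs, r ∈ maximalIdeal R) ∧
    RingTheory.Sequence.IsRegular M rs ∧ x = rs.length}

/-- `S` is a first syzygy `Ω M` of `M`: the kernel of a minimal free cover of `M`. -/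
def IsSyzygyOf [IsLocalRing R] (S M : ModuleCat.{u} R) : Prop :=
  ∃ F : ModuleCat.{u} R, Module.Free R F ∧ Module.Finite R F ∧
    ∃ π : F →ₗ[R] M, Function.Surjective π ∧
      LinearMap.ker π ≤ (maximalIdeal R) • (⊤ : Submodule R F) ∧
      Nonempty (S ≃ₗ[R] LinearMap.ker π)

/-- `S` is an `n`-th syzygy `Ω^n M` of `M`. -/
def IsNthSyzygyOf [IsLocalRing R] : ℕ → ModuleCat.{u} R → ModuleCat.{u} R → Prop
  | 0, S, M => Nonempty (S ≃ₗ[R] M)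
  | n + 1, S, M => ∃ T : ModuleCat.{u} R, IsSyzygyOf R T M ∧ IsNthSyzygyOf n S T

end



/-!
Why the four conditions are equivalent. Write `k` for the residue field.

*The lemma of Bass* (`ExtVanishes.of_residue`): by dévissage to modules `R/p` and Nakayama's lemma,
vanishing of `Ext^i(k, N)` for `i ≥ n` forces vanishing of `Ext^i(M, N)` for `i ≥ n` and all
finitely generated `M`. Together with Baer's criterion it shows that `R` is Gorenstein as soon
as `Ext^i(k, R) = 0` for large `i`, which holds whenever `k` has finite G-dimension.

*A maximal regular sequence* `rs` (`exists_maximal_regular`): `k` embeds into `R/(rs)`, a module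
of projective dimension at most the length `d` of `rs`. Dimension shifting along this embedding
gives `P_R(k) ≤ d` over any `R` (`ExtVanishes.residue_bound`). If moreover `R` is Gorenstein,
Rees' theorem shows that the maximal ideal is the only prime above `(rs)`
(`eq_maximalIdeal_of_gorenstein`): otherwise all `Ext^i(R/p, R)` vanish for a larger prime
`p ≠ 𝔪`, so `p` contains a regular sequence of length `d + 1`, so all `Ext^i(k, R)` vanish, and
then `Hom(R, R) = 0` by the lemma of Bass.

*G-dimension*: over a Gorenstein ring `Ext^i(-, R)` vanishes beyond a uniform bound on finitely
generated modules. Then every finitely generated `G` with `Ext^i(G, R) = 0` for `i > 0` is totally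
reflexive (`LeftOrth.isTotallyReflexive`), because one may shift dimensions along the exact
sequences dual to free covers of the successive syzygies of `G`. Hence all finitely generated
modules have finite G-dimension, and finiteness of the AB-dimension only concerns `P_R`.

*Reduction to finite length* (`exists_acBound_of_finite_length`): `rs` is weakly regular on a
`d`-th syzygy `M'` of `M`, and `M'/(rs)M'` has finite length. Finiteness of `P_R` passes from
`M'/(rs)M'` to `M'` by Nakayama's lemma and from `M'` to `M` by dimension shifting. This gives
(iii) ⇒ (i). For (iv) ⇒ (iii), `k` has finite AB-dimension and modules of finite length are
iterated extensions of copies of `k`.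
-/

/-! ### Exact sequences and vanishing of Ext -/

section ExtBasics

open Abelian

variable {R : Type u} [CommRing R]

/-- Comparison of the projective-resolution definition of Ext with `Abelian.Ext`, which carries the
long exact sequences in both variables. -/
lemma extVanishes_iff (M : Type u) [AddCommGroup M] [Module R M]
    (N : Type u) [AddCommGroup N] [Module R N] (n : ℕ) :
    ExtVanishes R M N n ↔
      Subsingleton (Abelian.Ext.{u} (ModuleCat.of R M) (ModuleCat.of R N) n) := by
  let P := projectiveResolution (ModuleCat.of R M)
  let Y := ModuleCat.of R N
  have h1 : ExtVanishes R M N n ↔ (P.complex.linearYonedaObj R Y).ExactAt n := by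
    rw [HomologicalComplex.exactAt_iff_isZero_homology, ← (P.isoExt n Y).isZero_iff,
      ModuleCat.isZero_iff_subsingleton]
    rfl
  rw [h1]
  have key : ∀ f : P.complex.X n ⟶ Y, (P.complex.linearYonedaObj R Y).d n (n+1) f =
      P.complex.d (n+1) n ≫ f := fun f => rfl
  constructor
  · intro h
    refine subsingleton_of_forall_eq 0 fun α => ?_
    obtain ⟨f, hf, rfl⟩ := P.extMk_surjective α (n+1) rfl
    cases n with
    | zero =>
      rw [HomologicalComplex.exactAt_iff' _ 0 0 1 (by simp) (by simp)] at h
      rw [ShortComplex.moduleCat_exact_iff] at h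
      obtain ⟨g, hg⟩ := h f hf
      have h0 : (P.complex.linearYonedaObj R Y).d 0 0 = 0 :=
        HomologicalComplex.shape _ _ _ (by simp)
      have hf0 : f = 0 := by
        rw [← hg]
        exact congrArg (fun φ => (ConcreteCategory.hom φ) g) h0
      subst hf0
      exact P.extMk_zero 1 rfl
    | succ n =>
      rw [HomologicalComplex.exactAt_iff' _ n (n+1) (n+2) (by simp) (by simp)] at h
      rw [ShortComplex.moduleCat_exact_iff] at h
      obtain ⟨g, hg⟩ := h f hf
      rw [P.extMk_eq_zero_iff _ _ _ _ n rfl]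
      exact ⟨g, hg⟩
  · intro h
    cases n with
    | zero =>
      rw [HomologicalComplex.exactAt_iff' _ 0 0 1 (by simp) (by simp)]
      rw [ShortComplex.moduleCat_exact_iff]
      intro f hf
      refine ⟨0, ?_⟩
      rw [map_zero]
      -- a cocycle in degree zero descends to a morphism `M ⟶ N`, which vanishes
      have hsub : Subsingleton (ModuleCat.of R M ⟶ Y) := Ext.homEquiv₀.symm.subsingleton
      have := P.exact₀.g_desc f hf
      have hz : P.exact₀.desc f hf = 0 := Subsingleton.elim (α := ModuleCat.of R M ⟶ Y) _ _
      rw [hz, Limits.comp_zero] at this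
      exact this
    | succ n =>
      rw [HomologicalComplex.exactAt_iff' _ n (n+1) (n+2) (by simp) (by simp)]
      rw [ShortComplex.moduleCat_exact_iff]
      intro f hf
      have h0 : P.extMk f (n+2) rfl hf = 0 := Subsingleton.elim _ _
      exact (P.extMk_eq_zero_iff _ _ _ _ n rfl).1 h0


variable {A B C N : Type u} [AddCommGroup A] [Module R A] [AddCommGroup B] [Module R B]
  [AddCommGroup C] [Module R C] [AddCommGroup N] [Module R N]

lemma shortExact_of_linear {f : A →ₗ[R] B} {g : B →ₗ[R] C} (hf : Function.Injective f)
    (hg : Function.Surjective g) (h : Function.Exact f g) :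
    (ModuleCat.shortComplexOfCompEqZero f g h.linearMap_comp_eq_zero).ShortExact where
  exact := ModuleCat.shortComplex_exact _ h
  mono_f := (ModuleCat.mono_iff_injective _).2 hf
  epi_g := (ModuleCat.epi_iff_surjective _).2 hg

lemma ExtVanishes.contra₂ {f : A →ₗ[R] B} {g : B →ₗ[R] C} (hf : Function.Injective f)
    (hg : Function.Surjective g) (h : Function.Exact f g) {n : ℕ}
    (h₁ : ExtVanishes R A N n) (h₃ : ExtVanishes R C N n) : ExtVanishes R B N n := by
  have hS := shortExact_of_linear hf hg h
  rw [extVanishes_iff] at *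
  refine subsingleton_of_forall_eq 0 fun x => ?_
  obtain ⟨y, rfl⟩ := Ext.contravariant_sequence_exact₂ hS _ x (h₁.elim _ _)
  rw [h₃.elim y 0, Ext.comp_zero]

lemma ExtVanishes.contra₃ {f : A →ₗ[R] B} {g : B →ₗ[R] C} (hf : Function.Injective f)
    (hg : Function.Surjective g) (h : Function.Exact f g) {n : ℕ}
    (h₁ : ExtVanishes R A N n) (h₂ : ExtVanishes R B N (n + 1)) : ExtVanishes R C N (n + 1) := by
  have hS := shortExact_of_linear hf hg h
  rw [extVanishes_iff] at *
  refine subsingleton_of_forall_eq 0 fun x => ?_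
  obtain ⟨y, rfl⟩ := Ext.contravariant_sequence_exact₃ hS _ x (h₂.elim _ _) (add_comm 1 n)
  rw [h₁.elim y 0, Ext.comp_zero]

lemma ExtVanishes.contra₁ {f : A →ₗ[R] B} {g : B →ₗ[R] C} (hf : Function.Injective f)
    (hg : Function.Surjective g) (h : Function.Exact f g) {n : ℕ}
    (h₂ : ExtVanishes R B N n) (h₃ : ExtVanishes R C N (n + 1)) : ExtVanishes R A N n := by
  have hS := shortExact_of_linear hf hg h
  rw [extVanishes_iff] at *
  refine subsingleton_of_forall_eq 0 fun x => ?_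
  obtain ⟨y, rfl⟩ := Ext.contravariant_sequence_exact₁ hS _ x (add_comm 1 n) (h₃.elim _ _)
  rw [h₂.elim y 0, Ext.comp_zero]

lemma ExtVanishes.co₁ {f : A →ₗ[R] B} {g : B →ₗ[R] C} (hf : Function.Injective f)
    (hg : Function.Surjective g) (h : Function.Exact f g) {n : ℕ}
    (h₃ : ExtVanishes R N C n) (h₂ : ExtVanishes R N B (n + 1)) : ExtVanishes R N A (n + 1) := by
  have hS := shortExact_of_linear hf hg h
  rw [extVanishes_iff] at *
  refine subsingleton_of_forall_eq 0 fun x => ?_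
  obtain ⟨y, rfl⟩ := Ext.covariant_sequence_exact₁ _ hS x (h₂.elim _ _) rfl
  rw [h₃.elim y 0, Ext.zero_comp]

lemma ExtVanishes.co₃ {f : A →ₗ[R] B} {g : B →ₗ[R] C} (hf : Function.Injective f)
    (hg : Function.Surjective g) (h : Function.Exact f g) {n : ℕ}
    (h₂ : ExtVanishes R N B n) (h₁ : ExtVanishes R N A (n + 1)) : ExtVanishes R N C n := by
  have hS := shortExact_of_linear hf hg h
  rw [extVanishes_iff] at *
  refine subsingleton_of_forall_eq 0 fun x => ?_
  obtain ⟨y, rfl⟩ := Ext.covariant_sequence_exact₃ _ hS x rfl (h₁.elim _ _)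
  rw [h₂.elim y 0, Ext.zero_comp]

lemma extVanishes_of_subsingleton_left [Subsingleton A] (n : ℕ) : ExtVanishes R A N n := by
  rw [extVanishes_iff]
  refine subsingleton_of_forall_eq 0 fun x => ?_
  have : 𝟙 (ModuleCat.of R A) = 0 :=
    (ModuleCat.isZero_of_subsingleton (ModuleCat.of R A)).eq_of_src _ _
  rw [← x.mk₀_id_comp, this, Ext.mk₀_zero, Ext.zero_comp]

lemma ExtVanishes.of_equiv (e : A ≃ₗ[R] B) {n : ℕ} (h : ExtVanishes R A N n) :
    ExtVanishes R B N n := by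
  refine h.contra₁ (f := e.symm.toLinearMap) (g := (0 : A →ₗ[R] PUnit.{u + 1}))
    e.symm.injective (fun y => ⟨0, rfl⟩) ?_ (extVanishes_of_subsingleton_left _)
  exact fun x => ⟨fun _ => e.symm.surjective x, fun _ => rfl⟩

lemma extVanishes_of_projective [Module.Projective R A] (n : ℕ) :
    ExtVanishes R A N (n + 1) := by
  rw [extVanishes_iff]
  have : Projective (ModuleCat.of R A) := ModuleCat.projective_of_categoryTheory_projective _
  exact Ext.subsingleton_of_projective _ _ _

lemma extVanishes_of_injective [hN : Module.Injective R N] (n : ℕ) :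
    ExtVanishes R A N (n + 1) := by
  rw [extVanishes_iff]
  have : Injective (ModuleCat.of R N) := Module.injective_object_of_injective_module R N
  exact Ext.subsingleton_of_injective _ _ _

lemma extVanishes_zero_iff : ExtVanishes R A N 0 ↔ Subsingleton (A →ₗ[R] N) := by
  rw [extVanishes_iff]
  exact (Ext.homEquiv₀.trans ModuleCat.homEquiv).subsingleton_congr

/-- If `Ext¹(C, N) = 0`, linear maps to `N` extend along the kernel of `B → C`. -/
lemma ExtVanishes.exists_extend {f : A →ₗ[R] B} {g : B →ₗ[R] C} (hf : Function.Injective f)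
    (hg : Function.Surjective g) (h : Function.Exact f g)
    (h₃ : ExtVanishes R C N 1) (φ : A →ₗ[R] N) : ∃ ψ : B →ₗ[R] N, ψ ∘ₗ f = φ := by
  have hS := shortExact_of_linear hf hg h
  rw [extVanishes_iff] at *
  obtain ⟨y, hy⟩ := Ext.contravariant_sequence_exact₁ hS (ModuleCat.of R N)
    (Ext.mk₀ (ModuleCat.ofHom φ)) (add_comm 1 0) (h₃.elim _ _)
  obtain ⟨ψ, rfl⟩ := Ext.homEquiv₀.symm.surjective y
  refine ⟨ψ.hom, ?_⟩
  rw [Ext.homEquiv₀_symm_apply, Ext.mk₀_comp_mk₀] at hy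
  have := Ext.homEquiv₀.symm.injective (a₁ := _) (a₂ := _) hy
  exact congrArg ModuleCat.Hom.hom this

/-- Multiplication by a regular element `x` of the maximal ideal on `Ext^n(M, N)` is onto
once `Ext^{n+1}(M/xM, N) = 0`, so Nakayama's lemma kills `Ext^n(M, N)`. -/
lemma ExtVanishes.of_quotSMulTop [IsLocalRing R] [IsNoetherianRing R] [Module.Finite R A]
    [Module.Finite R N] {x : R} (hx : IsSMulRegular A x) (hxm : x ∈ maximalIdeal R) {n : ℕ}
    (h : ExtVanishes R (QuotSMulTop x A) N (n + 1)) : ExtVanishes R A N n := by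
  have hS := hx.smulShortComplex_shortExact (M := ModuleCat.of R A)
  rw [extVanishes_iff] at *
  let E := Abelian.Ext.{u} (ModuleCat.of R A) (ModuleCat.of R N) n
  have htop : (⊤ : Submodule R E) ≤ maximalIdeal R • ⊤ := by
    intro e _
    obtain ⟨y, hy⟩ := Ext.contravariant_sequence_exact₁ hS (ModuleCat.of R N) e (add_comm 1 n)
      (h.elim _ _)
    have : e = x • y := by
      have hmul : ∀ z : E, (Ext.mk₀ (x • 𝟙 (ModuleCat.of R A))).comp z (zero_add n) = x • z :=
        fun z => by rw [Ext.mk₀_smul, Ext.smul_comp, Ext.mk₀_id_comp]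
      exact hy.symm.trans (hmul y)
    rw [this]
    exact Submodule.smul_mem_smul hxm trivial
  have hbot := Submodule.eq_bot_of_le_smul_of_le_jacobson_bot (maximalIdeal R) (⊤ : Submodule R E)
    Module.Finite.fg_top htop (IsLocalRing.maximalIdeal_le_jacobson _)
  exact (Submodule.subsingleton_iff R).1 (subsingleton_of_bot_eq_top hbot.symm)

end ExtBasics

/-! ### Dévissage to cyclic modules and the lemma of Bass -/

section Devissage

open Pointwise

variable {R : Type u} [CommRing R]

lemma isSMulRegular_quotient_of_notMem {p : Ideal R} [p.IsPrime] {x : R} (hx : x ∉ p) :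
    IsSMulRegular (R ⧸ p) x := by
  rw [isSMulRegular_iff_right_eq_zero_of_smul]
  intro a ha
  obtain ⟨a, rfl⟩ := Ideal.Quotient.mk_surjective a
  have h2 : (Ideal.Quotient.mk p) (x * a) = 0 := ha
  rw [Ideal.Quotient.eq_zero_iff_mem] at h2 ⊢
  exact (Ideal.IsPrime.mem_or_mem ‹_› h2).resolve_left hx

lemma sup_span_le_annihilator (p : Ideal R) (x : R) :
    p ⊔ Ideal.span {x} ≤ Module.annihilator R (QuotSMulTop x (R ⧸ p)) := by
  refine sup_le ?_ ?_
  · refine le_trans ?_ (LinearMap.annihilator_le_of_surjective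
      (Submodule.mkQ (x • (⊤ : Submodule R (R ⧸ p)))) (Submodule.mkQ_surjective _))
    rw [Ideal.annihilator_quotient]
  · rw [Ideal.span_singleton_le_iff_mem, Module.mem_annihilator]
    intro m
    obtain ⟨m, rfl⟩ := Submodule.mkQ_surjective _ m
    rw [← map_smul, Submodule.mkQ_apply, Submodule.Quotient.mk_eq_zero]
    exact Submodule.smul_mem_pointwise_smul _ _ _ trivial

variable [IsNoetherianRing R]

/-- Dévissage: for modules killed by `I` it suffices to test vanishing on `R/p`, `p ⊇ I` prime. -/
lemma ExtVanishes.of_primes {N : Type u} [AddCommGroup N] [Module R N] {n : ℕ} {I : Ideal R}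
    (h : ∀ p : Ideal R, p.IsPrime → I ≤ p → ∀ i ≥ n, ExtVanishes R (R ⧸ p) N i)
    (M : Type u) [AddCommGroup M] [Module R M] (hM : Module.Finite R M)
    (hI : I ≤ Module.annihilator R M) : ∀ i ≥ n, ExtVanishes R M N i := by
  revert hI
  induction hM using IsNoetherianRing.induction_on_isQuotientEquivQuotientPrime R with
  | subsingleton A => exact fun _ i _ => extVanishes_of_subsingleton_left i
  | quotient A p e =>
    intro hI i hi
    rw [e.annihilator_eq, Ideal.annihilator_quotient] at hI
    exact (h p.1 p.2 hI i hi).of_equiv e.symm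
  | exact A B C f g hf hg hfg hA hC =>
    intro hI i hi
    exact ExtVanishes.contra₂ hf hg hfg
      (hA (hI.trans (f.annihilator_le_of_injective hf)) i hi)
      (hC (hI.trans (g.annihilator_le_of_surjective hg)) i hi)

lemma isArtinian_of_primes {I : Ideal R}
    (h : ∀ p : Ideal R, p.IsPrime → I ≤ p → p.IsMaximal)
    (M : Type u) [AddCommGroup M] [Module R M] (hM : Module.Finite R M)
    (hI : I ≤ Module.annihilator R M) : IsArtinian R M := by
  revert hI
  induction hM using IsNoetherianRing.induction_on_isQuotientEquivQuotientPrime R with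
  | subsingleton A => exact fun _ => inferInstance
  | quotient A p e =>
    intro hI
    rw [e.annihilator_eq, Ideal.annihilator_quotient] at hI
    have := h p.1 p.2 hI
    have hs : IsSimpleModule R (R ⧸ p.1) := isSimpleModule_iff_isCoatom.2 this.out
    exact isArtinian_of_linearEquiv e.symm
  | exact A B C f g hf hg hfg hA hC =>
    intro hI
    have := hA (hI.trans (f.annihilator_le_of_injective hf))
    have := hC (hI.trans (g.annihilator_le_of_surjective hg))
    exact isArtinian_of_range_eq_ker f g (LinearMap.exact_iff.1 hfg).symm

variable [IsLocalRing R]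

/-- The lemma of Bass: vanishing of `Ext^i(k, N)` for `i ≥ n` propagates to all finitely generated
modules in the first variable. -/
lemma ExtVanishes.of_residue {N : Type u} [AddCommGroup N] [Module R N] [Module.Finite R N] {n : ℕ}
    (h : ∀ i ≥ n, ExtVanishes R (R ⧸ maximalIdeal R) N i)
    (M : Type u) [AddCommGroup M] [Module R M] [Module.Finite R M] :
    ∀ i ≥ n, ExtVanishes R M N i := by
  have key : ∀ p : Ideal R, p.IsPrime → ∀ i ≥ n, ExtVanishes R (R ⧸ p) N i := by
    intro p
    induction p using WellFoundedGT.induction with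
    | _ p ih =>
    intro hp i hi
    by_cases hpm : p = maximalIdeal R
    · exact hpm ▸ h i hi
    have hlt : p < maximalIdeal R := lt_of_le_of_ne (le_maximalIdeal hp.ne_top) hpm
    obtain ⟨x, hxm, hxp⟩ := SetLike.exists_of_lt hlt
    refine ExtVanishes.of_quotSMulTop (isSMulRegular_quotient_of_notMem hxp) hxm ?_
    refine ExtVanishes.of_primes (I := p ⊔ Ideal.span {x}) (n := n) ?_ _ inferInstance
      (sup_span_le_annihilator p x) (i + 1) (by omega)
    intro q hq hle
    refine ih q (lt_of_le_of_ne (le_sup_left.trans hle) ?_) hq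
    rintro rfl
    exact hxp (hle (Ideal.mem_sup_right (Ideal.mem_span_singleton_self x)))
  exact ExtVanishes.of_primes (I := ⊥) (fun p hp _ => key p hp) M inferInstance bot_le

/-- For a non-maximal prime `p` the vanishing range of `Ext^i(R/p, N)` improves by one. -/
lemma ExtVanishes.of_residue_prime {N : Type u} [AddCommGroup N] [Module R N] [Module.Finite R N]
    {n : ℕ} (h : ∀ i > n, ExtVanishes R (R ⧸ maximalIdeal R) N i)
    {p : Ideal R} [hp : p.IsPrime] (hpm : p ≠ maximalIdeal R) :
    ∀ i ≥ n, ExtVanishes R (R ⧸ p) N i := by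
  intro i hi
  have hlt : p < maximalIdeal R := lt_of_le_of_ne (le_maximalIdeal hp.ne_top) hpm
  obtain ⟨x, hxm, hxp⟩ := SetLike.exists_of_lt hlt
  exact ExtVanishes.of_quotSMulTop (isSMulRegular_quotient_of_notMem hxp) hxm
    (ExtVanishes.of_residue (n := n + 1) h _ (i + 1) (by omega))

end Devissage

/-! ### A maximal regular sequence and the residue field -/

section Depth

open Pointwise RingTheory.Sequence

variable {R : Type u} [CommRing R]

/-- Dividing by a weakly regular sequence raises the bound on non-vanishing `Ext` by its length. -/
lemma ExtVanishes.quot_regular {N : Type u} [AddCommGroup N] [Module R N] (rs : List R) :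
    ∀ (M : Type u) [AddCommGroup M] [Module R M] (j : ℕ), IsWeaklyRegular M rs →
      (∀ i > j, ExtVanishes R M N i) →
      ∀ i > j + rs.length, ExtVanishes R (M ⧸ (Ideal.ofList rs • ⊤ : Submodule R M)) N i := by
  induction rs with
  | nil =>
    intro M _ _ j _ h i hi
    refine (h i (by simpa using hi)).of_equiv (Submodule.quotEquivOfEqBot _ ?_).symm
    rw [Ideal.ofList_nil, Submodule.bot_smul]
  | cons r rs ih =>
    intro M _ _ j hr h i hi
    rw [isWeaklyRegular_cons_iff] at hr
    refine (ih (QuotSMulTop r M) (j + 1) hr.2 ?_ i (by simp at hi; omega)).of_equiv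
      (Submodule.quotOfListConsSMulTopEquivQuotSMulTopInner M r rs).symm
    intro i hi
    obtain ⟨i, rfl⟩ : ∃ l, i = l + 1 := ⟨i - 1, by omega⟩
    exact ExtVanishes.contra₃ (f := LinearMap.lsmul R M r) hr.1 (Submodule.mkQ_surjective _)
      (LinearMap.exact_lsmul_mkQ_smul_top M r) (h i (by omega)) (h (i + 1) (by omega))

variable [IsNoetherianRing R] [IsLocalRing R]

variable (R) in
/-- There is a (weakly) regular sequence `rs` in the maximal ideal such that `k` embeds
into `R/(rs)`; its length is the depth of `R`. -/
lemma exists_maximal_regular : ∃ rs : List R, (∀ r ∈ rs, r ∈ maximalIdeal R) ∧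
    IsRegular R rs ∧ ∃ f : (R ⧸ maximalIdeal R) →ₗ[R] R ⧸ (Ideal.ofList rs • ⊤ : Submodule R R),
      Function.Injective f := by
  let S : Set (Ideal R) := {I | ∃ rs : List R, (∀ r ∈ rs, r ∈ maximalIdeal R) ∧
    IsRegular R rs ∧ Ideal.ofList rs = I}
  obtain ⟨_, ⟨rs, hrs, hreg, rfl⟩, hmax⟩ := set_has_maximal_iff_noetherian.2
    (inferInstance : IsNoetherian R R) S ⟨_, [], by simp, IsRegular.nil R R, rfl⟩
  refine ⟨rs, hrs, hreg, ?_⟩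
  let Q := R ⧸ (Ideal.ofList rs • ⊤ : Submodule R R)
  have hQ : Nontrivial Q := hreg.quot_ofList_smul_nontrivial ⊤
  have hsub : (maximalIdeal R : Set R) ⊆ ⋃ p ∈ associatedPrimes R Q, p := by
    rw [biUnion_associatedPrimes_eq_compl_regular]
    intro x hx (hxr : IsSMulRegular Q x)
    have hmem : ∀ r ∈ rs ++ [x], r ∈ maximalIdeal R := by
      simpa [or_imp, forall_and] using ⟨hrs, hx⟩
    have h1 : IsRegular R (rs ++ [x]) := by
      refine (IsLocalRing.isRegular_iff_isWeaklyRegular_of_subset_maximalIdeal hmem).2 ?_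
      exact (isWeaklyRegular_append_iff R rs [x]).2
        ⟨hreg.1, (isWeaklyRegular_singleton_iff Q x).2 hxr⟩
    have h2 := hmax _ ⟨rs ++ [x], hmem, h1, rfl⟩
    have hxI : x ∈ Ideal.ofList rs := by
      by_contra hxI
      refine h2 (lt_of_le_of_ne ?_ fun h => hxI ?_)
      · rw [Ideal.ofList_append]; exact le_sup_left
      · rw [h, Ideal.ofList_append, Ideal.ofList_singleton]
        exact Ideal.mem_sup_right (Ideal.mem_span_singleton_self x)
    refine not_subsingleton Q ⟨fun a b => hxr ?_⟩
    have h0 : ∀ a : Q, x • a = 0 := by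
      intro a
      obtain ⟨a, rfl⟩ := Submodule.mkQ_surjective _ a
      rw [← map_smul, Submodule.mkQ_apply, Submodule.Quotient.mk_eq_zero]
      exact Submodule.smul_mem_smul hxI trivial
    exact (h0 a).trans (h0 b).symm
  obtain ⟨p, hp, hle⟩ := ((maximalIdeal R).subset_union_prime_finite
    (associatedPrimes.finite R Q) (f := id) 0 0 fun _ h _ _ ↦ h.1).1 hsub
  rw [AssociatedPrimes.mem_iff, isAssociatedPrime_iff] at hp
  obtain ⟨hprime, x, hx⟩ := hp
  have hpm : maximalIdeal R = p :=
    (maximalIdeal.isMaximal R).eq_of_le hprime.ne_top hle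
  have hker : maximalIdeal R = LinearMap.ker (LinearMap.toSpanSingleton R Q x) := by
    ext a
    rw [hpm, hx, Submodule.mem_colon_singleton]
    simp
  exact ⟨(maximalIdeal R).liftQ _ hker.le,
    LinearMap.ker_eq_bot.1 (Submodule.ker_liftQ_eq_bot' _ _ hker)⟩

/-- If `k` embeds into `R/(rs)` and `Ext^i(k, N)` vanishes for large `i`, then it vanishes for
all `i` beyond the length of `rs`. -/
lemma ExtVanishes.residue_bound {rs : List R} (hreg : IsWeaklyRegular R rs)
    {f : (R ⧸ maximalIdeal R) →ₗ[R] R ⧸ (Ideal.ofList rs • ⊤ : Submodule R R)}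
    (hf : Function.Injective f) {N : Type u} [AddCommGroup N] [Module R N] [Module.Finite R N]
    (h : ∃ n, ∀ i ≥ n, ExtVanishes R (R ⧸ maximalIdeal R) N i) :
    ∀ i > rs.length, ExtVanishes R (R ⧸ maximalIdeal R) N i := by
  obtain ⟨n, h⟩ := h
  induction n with
  | zero => exact fun i _ => h i (Nat.zero_le _)
  | succ n ih =>
    by_cases hn : n ≤ rs.length
    · exact fun i hi => h i (by omega)
    refine ih fun i hi => ?_
    refine ExtVanishes.contra₁ hf (Submodule.mkQ_surjective _)
      (LinearMap.exact_map_mkQ_range f) ?_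
      (ExtVanishes.of_residue h _ (i + 1) (by omega))
    refine ExtVanishes.quot_regular rs R 0 hreg (fun i hi => ?_) i (by omega)
    obtain ⟨i, rfl⟩ : ∃ l, i = l + 1 := ⟨i - 1, by omega⟩
    exact extVanishes_of_projective i

/-- If `Ext^i(k, R)` vanishes for large `i`, a maximal regular sequence is a system of
parameters: the maximal ideal is the only prime above it. -/
lemma eq_maximalIdeal_of_gorenstein {rs : List R}
    (hreg : IsRegular R rs)
    {f : (R ⧸ maximalIdeal R) →ₗ[R] R ⧸ (Ideal.ofList rs • ⊤ : Submodule R R)}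
    (hf : Function.Injective f)
    (h : ∃ n, ∀ i ≥ n, ExtVanishes R (R ⧸ maximalIdeal R) R i)
    {p : Ideal R} [hp : p.IsPrime] (hle : Ideal.ofList rs ≤ p) : p = maximalIdeal R := by
  by_contra hpm
  have h1 := ExtVanishes.residue_bound hreg.1 hf h
  have h2 := ExtVanishes.of_residue_prime h1 hpm
  have hsm : ∀ q : Ideal R, q ≠ ⊤ → q • (⊤ : Submodule R R) < ⊤ := by
    intro q hq
    rw [smul_eq_mul, Ideal.mul_top]
    exact lt_top_iff_ne_top.2 hq
  have hsupp : ∀ q : Ideal R, Module.support R (R ⧸ q) = PrimeSpectrum.zeroLocus q := by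
    intro q
    rw [Module.support_eq_zeroLocus, Ideal.annihilator_quotient]
  have h3 := ModuleCat.subsingleton_ext_of_exists_isRegular p (ModuleCat.of R (R ⧸ p))
    (hsupp p).le (ModuleCat.of R R) (hsm p hp.ne_top) rs
    (fun r hr => hle (Ideal.subset_span hr)) hreg
  have h4 : ∀ i, ExtVanishes R (R ⧸ p) R i := by
    intro i
    rcases lt_or_ge i rs.length with hi | hi
    · exact (extVanishes_iff _ _ _).2 (h3 i hi)
    · exact h2 i hi
  obtain ⟨ss, hlen, hss, hsreg⟩ := ModuleCat.exists_isRegular_of_exists_subsingleton_ext p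
    (rs.length + 1) (ModuleCat.of R R) (hsm p hp.ne_top) (ModuleCat.of R (R ⧸ p))
    (hsupp p) (fun i _ => (extVanishes_iff _ _ _).1 (h4 i))
  have h5 := ModuleCat.subsingleton_ext_of_exists_isRegular (maximalIdeal R)
    (ModuleCat.of R (R ⧸ maximalIdeal R)) (hsupp _).le (ModuleCat.of R R)
    (hsm _ (maximalIdeal.isMaximal R).ne_top) ss
    (fun r hr => le_maximalIdeal hp.ne_top (hss r hr)) hsreg
  have h6 : ∀ i ≥ 0, ExtVanishes R (R ⧸ maximalIdeal R) R i := by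
    intro i _
    rcases lt_or_ge i ss.length with hi | hi
    · exact (extVanishes_iff _ _ _).2 (h5 i hi)
    · exact h1 i (by omega)
  have h7 := extVanishes_zero_iff.1 (ExtVanishes.of_residue h6 R 0 le_rfl)
  have h8 := LinearMap.congr_fun (h7.elim (LinearMap.id : R →ₗ[R] R) 0) 1
  exact one_ne_zero h8

end Depth

/-! ### Auslander's condition: reduction to modules of finite length -/

section Auslander

open Pointwise RingTheory.Sequence

variable {R : Type u} [CommRing R]

/-- `b` bounds the vanishing of `Ext^n(M, -)` uniformly on the finitely generated modules of
`M^⊥`: the quantitative form of `P_R(M) < ∞`. -/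
def ACBound (M : Type u) [AddCommGroup M] [Module R M] (b : ℕ) : Prop :=
  ∀ (N : Type u) [AddCommGroup N] [Module R N], Module.Finite R N → MemPerp R M N →
    ∀ n ≥ b, ExtVanishes R M N n

lemma extPsup_lt_top_iff (M : Type u) [AddCommGroup M] [Module R M] :
    extPsup R M < ⊤ ↔ ∃ b, ACBound (R := R) M b := by
  have htop : ((⊤ : ℕ∞) : WithBot ℕ∞) = ⊤ := rfl
  constructor
  · intro h
    obtain ⟨b, hb⟩ : ∃ b : ℕ, extPsup R M ≤ ((b : ℕ∞) : WithBot ℕ∞) := by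
      induction hx : extPsup R M using WithBot.recBotCoe with
      | bot => exact ⟨0, bot_le⟩
      | coe a =>
        rw [hx, ← htop, WithBot.coe_lt_coe] at h
        exact ⟨a.toNat, WithBot.coe_le_coe.2 (ENat.natCast_toNat h.ne).ge⟩
    refine ⟨b + 1, fun N _ _ hN hperp n hn => ?_⟩
    by_contra hne
    have h1 : ((n : ℕ∞) : WithBot ℕ∞) ≤ extP R M N := le_sSup ⟨n, hne, rfl⟩
    have h2 : extP R M N ≤ extPsup R M := le_sSup ⟨N, _, _, hN, hperp, rfl⟩
    have h3 := (h1.trans h2).trans hb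
    rw [WithBot.coe_le_coe, Nat.cast_le] at h3
    omega
  · rintro ⟨b, hb⟩
    refine lt_of_le_of_lt (b := ((b : ℕ∞) : WithBot ℕ∞)) (sSup_le ?_) ?_
    · rintro _ ⟨N, _, _, hN, hperp, rfl⟩
      refine sSup_le ?_
      rintro _ ⟨n, hn, rfl⟩
      rw [WithBot.coe_le_coe, Nat.cast_le]
      by_contra hlt
      exact hn (hb N hN hperp n (by omega))
    · rw [← htop, WithBot.coe_lt_coe]
      exact ENat.natCast_lt_top b

lemma ACBound.of_equiv {A B : Type u} [AddCommGroup A] [Module R A] [AddCommGroup B] [Module R B]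
    (e : A ≃ₗ[R] B) {b : ℕ} (h : ACBound (R := R) A b) : ACBound (R := R) B b := by
  intro N _ _ hN ⟨d, hd⟩ n hn
  exact (h N hN ⟨d, fun n hn => (hd n hn).of_equiv e.symm⟩ n hn).of_equiv e

lemma ACBound.of_syzygy {K F M : Type u} [AddCommGroup K] [Module R K] [AddCommGroup F]
    [Module R F] [AddCommGroup M] [Module R M] [Module.Projective R F]
    {f : K →ₗ[R] F} {g : F →ₗ[R] M} (hf : Function.Injective f) (hg : Function.Surjective g)
    (hfg : Function.Exact f g) {b : ℕ} (h : ACBound (R := R) K b) :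
    ACBound (R := R) M (b + 1) := by
  intro N _ _ hN ⟨d, hd⟩ n hn
  obtain ⟨n, rfl⟩ : ∃ l, n = l + 1 := ⟨n - 1, by omega⟩
  refine ExtVanishes.contra₃ hf hg hfg (h N hN ⟨d + 1, fun i hi => ?_⟩ n (by omega))
    (extVanishes_of_projective n)
  obtain ⟨i, rfl⟩ : ∃ l, i = l + 1 := ⟨i - 1, by omega⟩
  exact ExtVanishes.contra₁ hf hg hfg (extVanishes_of_projective i) (hd _ (by omega))

/-- A weakly regular sequence gains one step on passing to a syzygy. -/
lemma isWeaklyRegular_take_syzygy (rs : List R) : ∀ (A F B : Type u) [AddCommGroup A] [Module R A]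
    [AddCommGroup F] [Module R F] [AddCommGroup B] [Module R B]
    (f : A →ₗ[R] F) (g : F →ₗ[R] B), Function.Injective f → Function.Surjective g →
    Function.Exact f g → ∀ j : ℕ, IsWeaklyRegular F rs → IsWeaklyRegular B (rs.take j) →
    IsWeaklyRegular A (rs.take (j + 1)) := by
  induction rs with
  | nil => intros; simp
  | cons r rs ih =>
    intro A F B _ _ _ _ _ _ f g hf hg hfg j hF hB
    rw [isWeaklyRegular_cons_iff] at hF
    rw [List.take_succ_cons, isWeaklyRegular_cons_iff]
    refine ⟨hF.1.of_injective f hf, ?_⟩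
    cases j with
    | zero => simp
    | succ j =>
      rw [List.take_succ_cons, isWeaklyRegular_cons_iff] at hB
      refine ih _ _ _ (QuotSMulTop.map r f) (QuotSMulTop.map r g) ?_
        (QuotSMulTop.map_surjective r hg) (QuotSMulTop.map_exact r hfg hg) j hF.2 hB.2
      have h0 : Function.Exact (0 : A →ₗ[R] A) f := by
        rw [LinearMap.exact_zero_iff_injective]; exact hf
      have h1 := QuotSMulTop.map_first_exact_on_four_term_exact_of_isSMulRegular_last h0 hfg hB.1
      rwa [map_zero, LinearMap.exact_zero_iff_injective] at h1

lemma IsWeaklyRegular.of_flat_module {rs : List R} (h : IsWeaklyRegular R rs)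
    (F : Type u) [AddCommGroup F] [Module R F] [Module.Flat R F] : IsWeaklyRegular F rs :=
  ((TensorProduct.rid R F).isWeaklyRegular_congr rs).1 (h.isWeaklyRegular_lTensor (M₂ := F))

variable [IsNoetherianRing R] [IsLocalRing R]

/-- For `x` regular on `M` in the maximal ideal, `M^⊥ ⊆ (M/xM)^⊥`, and vanishing of
`Ext^{n+1}(M/xM, N)` implies that of `Ext^n(M, N)` by Nakayama's lemma. -/
lemma ACBound.of_quot_regular {b : ℕ} (rs : List R) : ∀ (M : Type u) [AddCommGroup M] [Module R M],
    Module.Finite R M → (∀ r ∈ rs, r ∈ maximalIdeal R) → IsWeaklyRegular M rs →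
    ACBound (R := R) (M ⧸ (Ideal.ofList rs • ⊤ : Submodule R M)) b → ACBound (R := R) M b := by
  induction rs with
  | nil =>
    intro M _ _ _ _ _ h
    refine h.of_equiv (Submodule.quotEquivOfEqBot _ ?_)
    rw [Ideal.ofList_nil, Submodule.bot_smul]
  | cons r rs ih =>
    intro M _ _ hM hmem hreg h N _ _ hN ⟨d, hd⟩ n hn
    rw [isWeaklyRegular_cons_iff] at hreg
    have h1 : ACBound (R := R) (QuotSMulTop r M) b :=
      ih _ inferInstance (fun s hs => hmem s (List.mem_cons_of_mem _ hs)) hreg.2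
        (h.of_equiv (Submodule.quotOfListConsSMulTopEquivQuotSMulTopInner M r rs))
    refine ExtVanishes.of_quotSMulTop hreg.1 (hmem r List.mem_cons_self)
      (h1 N hN ⟨d + 1, fun i hi => ?_⟩ (n + 1) (by omega))
    obtain ⟨i, rfl⟩ : ∃ l, i = l + 1 := ⟨i - 1, by omega⟩
    exact ExtVanishes.contra₃ (f := LinearMap.lsmul R M r) hreg.1 (Submodule.mkQ_surjective _)
      (LinearMap.exact_lsmul_mkQ_smul_top M r) (hd i (by omega)) (hd (i + 1) (by omega))

/-- If `R/(rs)` has dimension zero, Auslander's condition for modules of finite length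
implies it for all finitely generated modules. -/
lemma exists_acBound_of_finite_length {rs : List R} (hmem : ∀ r ∈ rs, r ∈ maximalIdeal R)
    (hreg : IsWeaklyRegular R rs)
    (hdim : ∀ p : Ideal R, p.IsPrime → Ideal.ofList rs ≤ p → p.IsMaximal)
    (H : ∀ (L : Type u) [AddCommGroup L] [Module R L], Module.Finite R L → IsArtinian R L →
      ∃ b, ACBound (R := R) L b)
    (M : Type u) [AddCommGroup M] [Module R M] (hM : Module.Finite R M) :
    ∃ b, ACBound (R := R) M b := by
  have key : ∀ (t : ℕ) (M : Type u) [AddCommGroup M] [Module R M], Module.Finite R M →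
      IsWeaklyRegular M (rs.take (rs.length - t)) → ∃ b, ACBound (R := R) M b := by
    intro t
    induction t with
    | zero =>
      intro M _ _ hM hr
      rw [Nat.sub_zero, List.take_length] at hr
      have hart := isArtinian_of_primes hdim (M ⧸ (Ideal.ofList rs • ⊤ : Submodule R M))
        inferInstance (by
          intro a ha
          rw [Module.mem_annihilator]
          intro m
          obtain ⟨m, rfl⟩ := Submodule.mkQ_surjective _ m
          rw [← map_smul, Submodule.mkQ_apply, Submodule.Quotient.mk_eq_zero]
          exact Submodule.smul_mem_smul ha trivial)
      obtain ⟨b, hb⟩ := H _ inferInstance hart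
      exact ⟨b, ACBound.of_quot_regular rs M hM hmem hr hb⟩
    | succ t ih =>
      intro M _ _ hM hr
      obtain ⟨n, π, hπ⟩ := Module.Finite.exists_fin' R M
      obtain ⟨b, hb⟩ := ih (LinearMap.ker π) inferInstance (by
        by_cases ht : t < rs.length
        · have h := isWeaklyRegular_take_syzygy rs _ _ _ (LinearMap.ker π).subtype π
            Subtype.val_injective hπ (LinearMap.exact_subtype_ker_map π) _
            (IsWeaklyRegular.of_flat_module hreg _) hr
          rwa [show rs.length - (t + 1) + 1 = rs.length - t by omega] at h
        · rw [show rs.length - t = 0 by omega]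
          simp)
      exact ⟨b + 1, hb.of_syzygy (LinearMap.ker π).subtype_injective hπ
        (LinearMap.exact_subtype_ker_map π)⟩
  exact key rs.length M hM (by simp)

end Auslander

/-! ### G-dimension over a ring with uniformly vanishing `Ext(-, R)` -/

section GDimension

variable {R : Type u} [CommRing R]

lemma GdimLE.extVanishes {n : ℕ} : ∀ {M : ModuleCat.{u} R}, GdimLE R n M →
    ∀ i > n, ExtVanishes R M R i := by
  induction n with
  | zero => exact fun h => h.2.1
  | succ n ih =>
    rintro M ⟨G, _, hG, f, hf, hker⟩ i hi
    obtain ⟨i, rfl⟩ : ∃ l, i = l + 1 := ⟨i - 1, by omega⟩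
    exact ExtVanishes.contra₃ (LinearMap.ker f).subtype_injective hf
      (LinearMap.exact_subtype_ker_map f) (ih hker i (by omega)) (hG.2.1 _ (by omega))

lemma isTotallyReflexive_of_free (F : Type u) [AddCommGroup F] [Module R F] [Module.Free R F]
    [Module.Finite R F] : IsTotallyReflexive R F := by
  refine ⟨Module.bijective_dual_eval R F, fun n hn => ?_, fun n hn => ?_⟩ <;>
  · obtain ⟨i, rfl⟩ : ∃ l, n = l + 1 := ⟨n - 1, by omega⟩
    exact extVanishes_of_projective i

/-- A functional on the middle term of `A → B → C → 0` killing `A` factors through `C`. -/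
lemma exists_factor {A B C : Type u} [AddCommGroup A] [Module R A] [AddCommGroup B] [Module R B]
    [AddCommGroup C] [Module R C] {f : A →ₗ[R] B} {g : B →ₗ[R] C} (hg : Function.Surjective g)
    (hfg : Function.Exact f g) (φ : B →ₗ[R] R) (hφ : φ ∘ₗ f = 0) : ∃ θ : C →ₗ[R] R, θ ∘ₗ g = φ := by
  have h : φ ∈ LinearMap.range g.dualMap := by
    rw [LinearMap.range_dualMap_eq_dualAnnihilator_ker_of_surjective g hg,
      Submodule.mem_dualAnnihilator]
    intro x hx
    obtain ⟨a, rfl⟩ := (hfg x).1 hx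
    exact LinearMap.congr_fun hφ a
  exact h

lemma exact_dualMap {A B C : Type u} [AddCommGroup A] [Module R A] [AddCommGroup B] [Module R B]
    [AddCommGroup C] [Module R C] {f : A →ₗ[R] B} {g : B →ₗ[R] C} (hg : Function.Surjective g)
    (hfg : Function.Exact f g) : Function.Exact g.dualMap f.dualMap := by
  intro φ
  refine ⟨fun h => exists_factor hg hfg φ h, ?_⟩
  rintro ⟨θ, rfl⟩
  ext a
  simp [hfg.apply_apply_eq_zero a]

/-- The left Ext-orthogonal of `R`: all higher `Ext^i(G, R)` vanish. -/
def LeftOrth (G : Type u) [AddCommGroup G] [Module R G] : Prop :=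
  ∀ i > 0, ExtVanishes R G R i

section Syzygy

variable {K F G : Type u} [AddCommGroup K] [Module R K] [AddCommGroup F] [Module R F]
  [AddCommGroup G] [Module R G] {ι : K →ₗ[R] F} {π : F →ₗ[R] G}

lemma LeftOrth.syzygy [Module.Projective R F] (hι : Function.Injective ι)
    (hπ : Function.Surjective π) (h : Function.Exact ι π) (hG : LeftOrth (R := R) G) :
    LeftOrth (R := R) K := by
  intro i hi
  obtain ⟨i, rfl⟩ : ∃ l, i = l + 1 := ⟨i - 1, by omega⟩
  exact ExtVanishes.contra₁ hι hπ h (extVanishes_of_projective i) (hG _ (by omega))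

lemma LeftOrth.dualMap_surjective (hι : Function.Injective ι)
    (hπ : Function.Surjective π) (h : Function.Exact ι π) (hG : LeftOrth (R := R) G) :
    Function.Surjective ι.dualMap :=
  fun φ => ExtVanishes.exists_extend hι hπ h (hG 1 one_pos) φ

end Syzygy

variable [IsNoetherianRing R]

/-- Dimension shifting along the dual of a free resolution lowers the bound `n` on the
non-vanishing of `Ext(-, R)` all the way to zero for duals of modules in the left orthogonal. -/
lemma LeftOrth.dual {n : ℕ} (H : ∀ (M : Type u) [AddCommGroup M] [Module R M],
    Module.Finite R M → ∀ i > n, ExtVanishes R M R i)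
    (G : Type u) [AddCommGroup G] [Module R G] (hfin : Module.Finite R G)
    (hG : LeftOrth (R := R) G) : LeftOrth (R := R) (Module.Dual R G) := by
  have key : ∀ (j : ℕ) (G : Type u) [AddCommGroup G] [Module R G], Module.Finite R G →
      LeftOrth (R := R) G → ∀ i > 0, i + j > n → ExtVanishes R (Module.Dual R G) R i := by
    intro j
    induction j with
    | zero => exact fun G _ _ _ _ i _ hi => H _ inferInstance i hi
    | succ j ih =>
      intro G _ _ hfin hG i hi hij
      obtain ⟨m, π, hπ⟩ := Module.Finite.exists_fin' R G
      have hex := LinearMap.exact_subtype_ker_map π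
      have hι := (LinearMap.ker π).subtype_injective
      have h1 := ih (LinearMap.ker π) inferInstance (hG.syzygy hι hπ hex) (i + 1) (by omega)
        (by omega)
      refine ExtVanishes.contra₁ (LinearMap.dualMap_injective_of_surjective hπ)
        (hG.dualMap_surjective hι hπ hex) (exact_dualMap hπ hex) ?_ h1
      obtain ⟨i, rfl⟩ : ∃ l, i = l + 1 := ⟨i - 1, by omega⟩
      exact extVanishes_of_projective i
  exact fun i hi => key n G hfin hG i hi (by omega)

/-- An element of `G**` extends along `G* → F*` for a free cover `F → G` with kernel `K`, since
`Ext^1(K*, R) = 0`, and `F` is reflexive. -/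
lemma LeftOrth.eval_surjective {n : ℕ} (H : ∀ (M : Type u) [AddCommGroup M] [Module R M],
    Module.Finite R M → ∀ i > n, ExtVanishes R M R i)
    (G : Type u) [AddCommGroup G] [Module R G] (hfin : Module.Finite R G)
    (hG : LeftOrth (R := R) G) : Function.Surjective (Module.Dual.eval R G) := by
  intro Φ
  obtain ⟨m, π, hπ⟩ := Module.Finite.exists_fin' R G
  have hex := LinearMap.exact_subtype_ker_map π
  have hι := (LinearMap.ker π).subtype_injective
  have hK := LeftOrth.dual H (LinearMap.ker π) inferInstance (hG.syzygy hι hπ hex)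
  obtain ⟨Ψ, hΨ⟩ := ExtVanishes.exists_extend (LinearMap.dualMap_injective_of_surjective hπ)
    (hG.dualMap_surjective hι hπ hex) (exact_dualMap hπ hex) (hK 1 one_pos) Φ
  obtain ⟨v, rfl⟩ := (Module.bijective_dual_eval R (Fin m → R)).2 Ψ
  refine ⟨π v, ?_⟩
  ext g
  exact LinearMap.congr_fun hΨ g

lemma LeftOrth.isTotallyReflexive {n : ℕ} (H : ∀ (M : Type u) [AddCommGroup M] [Module R M],
    Module.Finite R M → ∀ i > n, ExtVanishes R M R i)
    (G : Type u) [AddCommGroup G] [Module R G] (hfin : Module.Finite R G)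
    (hG : LeftOrth (R := R) G) : IsTotallyReflexive R G := by
  refine ⟨⟨?_, LeftOrth.eval_surjective H G hfin hG⟩, hG, LeftOrth.dual H G hfin hG⟩
  rw [injective_iff_map_eq_zero]
  intro x hx
  obtain ⟨m, π, hπ⟩ := Module.Finite.exists_fin' R G
  obtain ⟨v, rfl⟩ := hπ x
  have hex := LinearMap.exact_subtype_ker_map π
  have hι := (LinearMap.ker π).subtype_injective
  -- evaluation at `v` kills `G*`, hence comes from `K**`, hence from an element of `K`
  obtain ⟨θ, hθ⟩ := exists_factor (hG.dualMap_surjective hι hπ hex) (exact_dualMap hπ hex)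
    (Module.Dual.eval R _ v) (by ext g; exact LinearMap.congr_fun hx g)
  obtain ⟨k, rfl⟩ := LeftOrth.eval_surjective H (LinearMap.ker π) inferInstance
    (hG.syzygy hι hπ hex) θ
  have hv : (k : Fin m → R) = v := by
    apply (Module.bijective_dual_eval R (Fin m → R)).1
    ext g
    exact LinearMap.congr_fun hθ _
  rw [← hv]
  exact k.2

/-- A uniform bound `n` on `Ext(-, R)` makes G-dimension detectable by vanishing of `Ext(-, R)`:
after `j` free covers the kernel is in the left orthogonal, hence totally reflexive. -/
lemma GdimLE.of_extVanishes {n : ℕ} (H : ∀ (M : Type u) [AddCommGroup M] [Module R M],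
    Module.Finite R M → ∀ i > n, ExtVanishes R M R i) (j : ℕ) :
    ∀ (M : Type u) [AddCommGroup M] [Module R M], Module.Finite R M →
    (∀ i > j, ExtVanishes R M R i) → GdimLE R j (ModuleCat.of R M) := by
  induction j with
  | zero => exact fun M _ _ hM h => LeftOrth.isTotallyReflexive H M hM h
  | succ j ih =>
    intro M _ _ hM h
    obtain ⟨m, π, hπ⟩ := Module.Finite.exists_fin' R M
    refine ⟨ModuleCat.of R (Fin m → R), inferInstanceAs (Module.Finite R (Fin m → R)),
      isTotallyReflexive_of_free (Fin m → R), π, hπ, ih (LinearMap.ker π) inferInstance ?_⟩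
    intro i hi
    obtain ⟨i, rfl⟩ : ∃ l, i = l + 1 := ⟨i - 1, by omega⟩
    exact ExtVanishes.contra₁ (LinearMap.ker π).subtype_injective hπ
      (LinearMap.exact_subtype_ker_map π) (extVanishes_of_projective i) (h _ (by omega))

end GDimension

/-! ### Injective dimension and AB-dimension -/

section Dimensions

variable {R : Type u} [CommRing R]

lemma InjDimLE.extVanishes {n : ℕ} : ∀ {N : ModuleCat.{u} R}, InjDimLE R n N →
    ∀ (M : Type u) [AddCommGroup M] [Module R M], ∀ i > n, ExtVanishes R M N i := by
  induction n with
  | zero =>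
    intro N (hN : Module.Injective R N) M _ _ i hi
    obtain ⟨i, rfl⟩ : ∃ l, i = l + 1 := ⟨i - 1, by omega⟩
    exact extVanishes_of_injective i
  | succ n ih =>
    rintro N ⟨I, hI, f, hf, h⟩ M _ _ i hi
    obtain ⟨i, rfl⟩ : ∃ l, i = l + 1 := ⟨i - 1, by omega⟩
    exact ExtVanishes.co₁ hf (Submodule.mkQ_surjective _) (LinearMap.exact_map_mkQ_range f)
      (ih h M i (by omega)) (extVanishes_of_injective i)

/-- Vanishing of `Ext^i(M, N)` for `i > n` and finitely generated `M` bounds the injective dimension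
of `N` by `n`: Baer's criterion only involves the cyclic modules `R/I`. -/
lemma InjDimLE.of_extVanishes (n : ℕ) : ∀ (N : Type u) [AddCommGroup N] [Module R N],
    (∀ (M : Type u) [AddCommGroup M] [Module R M], Module.Finite R M →
      ∀ i > n, ExtVanishes R M N i) → InjDimLE R n (ModuleCat.of R N) := by
  induction n with
  | zero =>
    intro N _ _ h
    refine Module.Baer.injective fun I φ => ?_
    obtain ⟨ψ, hψ⟩ := ExtVanishes.exists_extend I.injective_subtype (Submodule.mkQ_surjective I)
      (LinearMap.exact_subtype_mkQ I) (h (R ⧸ I) inferInstance 1 one_pos) φ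
    exact ⟨ψ, fun x hx => LinearMap.congr_fun hψ ⟨x, hx⟩⟩
  | succ n ih =>
    intro N _ _ h
    let I := Injective.under (ModuleCat.of R N)
    have hI : Module.Injective R I := 
      (Module.injective_iff_injective_object R I).2
        (inferInstanceAs (Injective (Injective.under (ModuleCat.of R N))))
    have hf : Function.Injective (Injective.ι (ModuleCat.of R N)).hom :=
      (ModuleCat.mono_iff_injective _).1 inferInstance
    refine ⟨I, hI, _, hf, ih _ fun M _ _ hM i hi => ?_⟩
    obtain ⟨i, rfl⟩ : ∃ l, i = l + 1 := ⟨i - 1, by omega⟩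
    exact ExtVanishes.co₃ hf (Submodule.mkQ_surjective _)
      (LinearMap.exact_map_mkQ_range _) (extVanishes_of_injective i) (h M hM _ (by omega))

lemma abdim_lt_top_iff (M : Type u) [AddCommGroup M] [Module R M] :
    abdim R M < ⊤ ↔ (∃ n, GdimLE R n (ModuleCat.of R M)) ∧ ∃ b, ACBound (R := R) M b := by
  have htop : ((⊤ : ℕ∞) : WithBot ℕ∞) = ⊤ := rfl
  rw [abdim, max_lt_iff, extPsup_lt_top_iff]
  refine and_congr_left fun _ => ?_
  rw [← htop, WithBot.coe_lt_coe, gdim, sInf_lt_iff]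
  constructor
  · rintro ⟨_, ⟨n, hn, rfl⟩, -⟩
    exact ⟨n, hn⟩
  · rintro ⟨n, hn⟩
    exact ⟨_, ⟨n, hn, rfl⟩, ENat.natCast_lt_top n⟩

/-- Over a Gorenstein ring all finitely generated modules have finite G-dimension, so only
the Ext-vanishing part of the AB-dimension matters. -/
lemma abdim_lt_top_iff_of_gorenstein [IsNoetherianRing R] (h : IsGorensteinRing R)
    (M : Type u) [AddCommGroup M] [Module R M] (hM : Module.Finite R M) :
    abdim R M < ⊤ ↔ ∃ b, ACBound (R := R) M b := by
  obtain ⟨n, hn⟩ := h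
  rw [abdim_lt_top_iff, and_iff_right]
  exact ⟨n, GdimLE.of_extVanishes (fun M _ _ _ => hn.extVanishes M) n M hM (hn.extVanishes M)⟩

variable [IsNoetherianRing R] [IsLocalRing R]

variable (R) in
/-- `P_R(k) < ∞` holds over every noetherian local ring. -/
lemma exists_acBound_residue : ∃ b, ACBound (R := R) (R ⧸ maximalIdeal R) b := by
  obtain ⟨rs, -, hreg, f, hf⟩ := exists_maximal_regular R
  exact ⟨rs.length + 1, fun N _ _ hN hperp n hn =>
    ExtVanishes.residue_bound hreg.1 hf hperp n hn⟩

lemma abdim_lt_top_of_isFiniteLength (hG : IsGorensteinRing R)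
    (hext : ∀ (A B C : Type u) [AddCommGroup A] [Module R A] [AddCommGroup B] [Module R B]
      [AddCommGroup C] [Module R C],
      Module.Finite R A → Module.Finite R B → Module.Finite R C →
      ∀ (f : A →ₗ[R] B) (g : B →ₗ[R] C), Function.Injective f → Function.Surjective g →
        LinearMap.range f = LinearMap.ker g →
        abdim R A < ⊤ → abdim R C < ⊤ → abdim R B < ⊤)
    (L : Type u) [AddCommGroup L] [Module R L] (hL : IsFiniteLength R L) : abdim R L < ⊤ := by
  induction hL with
  | @of_subsingleton L =>
    exact (abdim_lt_top_iff_of_gorenstein hG L inferInstance).2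
      ⟨0, fun N _ _ _ _ n _ => extVanishes_of_subsingleton_left n⟩
  | @of_simple_quotient M _ _ N hs hN ih =>
    have hM : IsFiniteLength R M := .of_simple_quotient hN
    have := (isFiniteLength_iff_isNoetherian_isArtinian.1 hM).1
    refine hext N M (M ⧸ N) inferInstance inferInstance inferInstance N.subtype N.mkQ
      N.injective_subtype N.mkQ_surjective (by simp) ih ?_
    obtain ⟨I, hI, ⟨e⟩⟩ := isSimpleModule_iff_quot_maximal.1 hs
    obtain rfl := IsLocalRing.eq_maximalIdeal hI
    obtain ⟨b, hb⟩ := exists_acBound_residue R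
    exact (abdim_lt_top_iff_of_gorenstein hG _ inferInstance).2 ⟨b, hb.of_equiv e.symm⟩

end Dimensions
/-- Theorem 1.2(1): equivalence of (i) `R` is an AB ring, (ii) every finitely generated
module has finite AB-dimension, (iii) every finitely generated module of finite length has
finite AB-dimension, (iv) `R` is Gorenstein and the class of finitely generated modules of
finite AB-dimension is closed under extensions. -/
theorem statement0 (R : Type u) [CommRing R] [IsLocalRing R] [IsNoetherianRing R] :
    List.TFAE [
      -- (i) `R` is an AB ring: Gorenstein and every finitely generated module satisfies (AC)
      IsGorensteinRing R ∧ (∀ (M : Type u) [AddCommGroup M] [Module R M],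
        Module.Finite R M → extPsup R M < ⊤),
      -- (ii) every finitely generated module has finite AB-dimension
      ∀ (M : Type u) [AddCommGroup M] [Module R M], Module.Finite R M → abdim R M < ⊤,
      -- (iii) every finitely generated module of finite length has finite AB-dimension
      ∀ (L : Type u) [AddCommGroup L] [Module R L],
        Module.Finite R L → IsArtinian R L → IsNoetherian R L → abdim R L < ⊤,
      -- (iv) `R` is Gorenstein and modules of finite AB-dimension are closed under extensions
      IsGorensteinRing R ∧
        (∀ (A B C : Type u) [AddCommGroup A] [Module R A] [AddCommGroup B] [Module R B]
          [AddCommGroup C] [Module R C],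
          Module.Finite R A → Module.Finite R B → Module.Finite R C →
          ∀ (f : A →ₗ[R] B) (g : B →ₗ[R] C), Function.Injective f → Function.Surjective g →
            LinearMap.range f = LinearMap.ker g →
            abdim R A < ⊤ → abdim R C < ⊤ → abdim R B < ⊤)] := by
  have gor_of_fl : (∀ (L : Type u) [AddCommGroup L] [Module R L],
      Module.Finite R L → IsArtinian R L → IsNoetherian R L → abdim R L < ⊤) →
      IsGorensteinRing R := by
    intro h
    have hs : IsSimpleModule R (R ⧸ maximalIdeal R) :=
      isSimpleModule_iff_isCoatom.2 (maximalIdeal.isMaximal R).out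
    obtain ⟨⟨n, hn⟩, -⟩ := (abdim_lt_top_iff _).1
      (h (R ⧸ maximalIdeal R) inferInstance inferInstance inferInstance)
    exact ⟨n, InjDimLE.of_extVanishes n R fun M _ _ hM =>
      ExtVanishes.of_residue (n := n + 1) hn.extVanishes M⟩
  tfae_have 1 → 2 := fun ⟨hG, h⟩ M _ _ hM =>
    (abdim_lt_top_iff_of_gorenstein hG M hM).2 ((extPsup_lt_top_iff M).1 (h M hM))
  tfae_have 2 → 3 := fun h L _ _ hL _ _ => h L hL
  tfae_have 3 → 1 := by
    intro h
    have hG := gor_of_fl h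
    obtain ⟨n, hn⟩ := hG
    refine ⟨⟨n, hn⟩, fun M _ _ hM => (extPsup_lt_top_iff M).2 ?_⟩
    obtain ⟨rs, hmem, hreg, f, hf⟩ := exists_maximal_regular R
    refine exists_acBound_of_finite_length hmem hreg.1 (fun p hp hle => ?_)
      (fun L _ _ hL hA => ((abdim_lt_top_iff L).1 (h L hL hA inferInstance)).2) M hM
    rw [eq_maximalIdeal_of_gorenstein hreg hf
      ⟨n + 1, fun i hi => hn.extVanishes (R ⧸ maximalIdeal R) i hi⟩ hle]
    exact maximalIdeal.isMaximal R
  tfae_have 2 → 4 := fun h =>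
    ⟨gor_of_fl fun L _ _ hL _ _ => h L hL, fun A B C _ _ _ _ _ _ _ hB _ _ _ _ _ _ _ _ => h B hB⟩
  tfae_have 4 → 3 := fun ⟨hG, hext⟩ L _ _ _ _ _ =>
    abdim_lt_top_of_isFiniteLength hG hext L
      (isFiniteLength_iff_isNoetherian_isArtinian.2 ⟨inferInstance, inferInstance⟩)
  tfae_finish
end

section
/- Let (R, 𝔪, k) be a commutative noetherian local ring and M a nonzero finitely generated R-module. If AB-dim_R M < ∞, then AB-dim_R M = depth R − depth_R M. -/
/-!
For a module `M` of finite AB-dimension the formula splits into two facts.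

* `P_R(M) ≤ G-dim M` (`extPsup_le`). Put `g = G-dim M`, so `Ext^j(M, F) = 0` for `j > g` and `F`
  finite free. If `Ext^i(M, N) ≠ 0` for some `N ∈ M^⊥` and `i > g`, dimension shifting along free
  covers `0 → N' → F → N → 0` gives modules in `M^⊥` with nonvanishing `Ext` in every degree
  `i + j`, so `P_R(M) = ∞`. Hence `AB-dim M = G-dim M` once `AB-dim M` is finite.

* The Auslander–Bridger formula `depth M + G-dim M = depth R` (`auslander_bridger`), proved by
  induction on `G-dim M`. Depth is handled through Rees' theorem as the least degree in which
  `Ext(k, -)` is nonzero. The three steps are as follows.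
  - `G-dim M = 0`: `M ≅ Hom(M*, R)` with `Ext^i(M*, R) = 0` for `i > 0`, and such a `Hom` has the
    same depth as `R` (`DepthEq.hom`).
  - `G-dim M ≥ 2`: for `0 → K → G → M → 0` with `G` totally reflexive, `depth K < depth G`, and the
    long exact sequence of `Ext(k, -)` gives `depth M = depth K - 1`.
  - `G-dim M = 1`: now `K` and `G` both have depth `d = depth R`, so `depth M ≥ d - 1`, and it must
    be shown that `depth M < d`. The sequence is the `R`-dual of `φ : G* → K*`. If `depth M ≥ d`, one
    may kill elements regular on both `R` and `M` until the depth is zero, and there any proper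
    image of `φ` would be detected by a nonzero map `K* → k → R / (x_1, …, x_d)` that dies on `G*`
    (`surjective_of_depthGE`). So `φ` is surjective, and then `M` is totally reflexive
    (`isTotallyReflexive_coker`), contrary to `G-dim M = 1`.
-/

open CategoryTheory IsLocalRing

/-! ### Vanishing of Ext and long exact sequences -/

section ABDim

open Abelian RingTheory.Sequence
open scoped Pointwise

universe v

variable {R : Type v} [CommRing R]

/-- Vanishing of `Ext^n_R(M, N)`, where `Ext` is computed in the derived category. -/
def EV (R : Type v) [CommRing R] (M : Type v) [AddCommGroup M] [Module R M]
    (N : Type v) [AddCommGroup N] [Module R N] (n : ℕ) : Prop :=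
  Subsingleton (Abelian.Ext (ModuleCat.of R M) (ModuleCat.of R N) n)

variable {A B C M N : Type v} [AddCommGroup A] [Module R A] [AddCommGroup B] [Module R B]
  [AddCommGroup C] [Module R C] [AddCommGroup M] [Module R M] [AddCommGroup N] [Module R N]

lemma EV_zero_iff : EV R M N 0 ↔ Subsingleton (M →ₗ[R] N) :=
  (Ext.addEquiv₀.trans ModuleCat.homAddEquiv).subsingleton_congr

/-- The left derived functor model of `Ext` and the derived category model vanish simultaneously
(stated in positive degrees): both are computed by a projective resolution of `M`. -/
lemma extVanishes_succ_iff (n : ℕ) : ExtVanishes R M N (n + 1) ↔ EV R M N (n + 1) := by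
  let P := projectiveResolution (ModuleCat.of R M)
  let Y := ModuleCat.of R N
  have key : ExtVanishes R M N (n + 1) ↔
      ((P.complex.linearYonedaObj R Y).ExactAt (n + 1)) := by
    rw [HomologicalComplex.exactAt_iff_isZero_homology, ModuleCat.isZero_iff_subsingleton]
    exact ((P.isoExt (n + 1) Y).toLinearEquiv.toEquiv).subsingleton_congr
  rw [key, HomologicalComplex.exactAt_iff' _ n (n + 1) (n + 2) (by simp) (by simp),
    ShortComplex.moduleCat_exact_iff]
  constructor
  · intro h
    refine subsingleton_of_forall_eq 0 fun α => ?_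
    obtain ⟨f, hf, rfl⟩ := P.extMk_surjective α (n + 2) rfl
    rw [P.extMk_eq_zero_iff f _ rfl hf n rfl]
    exact h f hf
  · intro h f hf
    exact (P.extMk_eq_zero_iff f (n + 2) rfl hf n rfl).1 (@Subsingleton.elim _ h _ _)

variable {f : A →ₗ[R] B} {g : B →ₗ[R] C}

lemma ses (hf : Function.Injective f) (hg : Function.Surjective g) (h : Function.Exact f g) :
    (ModuleCat.shortComplexOfCompEqZero f g h.linearMap_comp_eq_zero).ShortExact :=
  ModuleCat.shortComplex_shortExact _ h hf hg

section cov
variable (hf : Function.Injective f) (hg : Function.Surjective g) (h : Function.Exact f g)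
include hf hg h

lemma EV.cov₂ {i : ℕ} (h1 : EV R M A i) (h3 : EV R M C i) : EV R M B i := by
  refine subsingleton_of_forall_eq 0 fun x => ?_
  obtain ⟨y, rfl⟩ := Ext.covariant_sequence_exact₂ (ModuleCat.of R M) (ses hf hg h) x
    (@Subsingleton.elim _ h3 _ _)
  rw [@Subsingleton.elim _ h1 y 0, Ext.zero_comp]

lemma EV.cov₃ {i : ℕ} (h2 : EV R M B i) (h1 : EV R M A (i + 1)) : EV R M C i := by
  refine subsingleton_of_forall_eq 0 fun x => ?_
  obtain ⟨y, rfl⟩ := Ext.covariant_sequence_exact₃ (ModuleCat.of R M) (ses hf hg h) x rfl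
    (@Subsingleton.elim _ h1 _ _)
  rw [@Subsingleton.elim _ h2 y 0, Ext.zero_comp]

lemma EV.cov₁ {i : ℕ} (h3 : EV R M C i) (h2 : EV R M B (i + 1)) : EV R M A (i + 1) := by
  refine subsingleton_of_forall_eq 0 fun x => ?_
  obtain ⟨y, rfl⟩ := Ext.covariant_sequence_exact₁ (ModuleCat.of R M) (ses hf hg h) x
    (@Subsingleton.elim _ h2 _ _) rfl
  rw [@Subsingleton.elim _ h3 y 0, Ext.zero_comp]

lemma EV.con₂ {i : ℕ} (h1 : EV R A N i) (h3 : EV R C N i) : EV R B N i := by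
  refine subsingleton_of_forall_eq 0 fun x => ?_
  obtain ⟨y, rfl⟩ := Ext.contravariant_sequence_exact₂ (ses hf hg h) (ModuleCat.of R N) x
    (@Subsingleton.elim _ h1 _ _)
  rw [@Subsingleton.elim _ h3 y 0, Ext.comp_zero]

lemma EV.con₁ {i : ℕ} (h2 : EV R B N i) (h3 : EV R C N (i + 1)) : EV R A N i := by
  refine subsingleton_of_forall_eq 0 fun x => ?_
  obtain ⟨y, rfl⟩ := Ext.contravariant_sequence_exact₁ (ses hf hg h) (ModuleCat.of R N) x
    (add_comm 1 i) (@Subsingleton.elim _ h3 _ _)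
  rw [@Subsingleton.elim _ h2 y 0, Ext.comp_zero]

lemma EV.con₃ {i : ℕ} (h1 : EV R A N i) (h2 : EV R B N (i + 1)) : EV R C N (i + 1) := by
  refine subsingleton_of_forall_eq 0 fun x => ?_
  obtain ⟨y, rfl⟩ := Ext.contravariant_sequence_exact₃ (ses hf hg h) (ModuleCat.of R N) x
    (@Subsingleton.elim _ h2 _ _) (add_comm 1 i)
  rw [@Subsingleton.elim _ h1 y 0, Ext.comp_zero]

/-- Maps `M → C` lift along `B → C` when `Ext¹(M, A) = 0`. -/
lemma EV.lift (h1 : EV R M A 1) (c : M →ₗ[R] C) : ∃ b : M →ₗ[R] B, g ∘ₗ b = c := by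
  obtain ⟨y, hy⟩ := Ext.covariant_sequence_exact₃ (ModuleCat.of R M) (ses hf hg h)
    (Ext.mk₀ (ModuleCat.ofHom c)) (zero_add 1) (@Subsingleton.elim _ h1 _ _)
  obtain ⟨b, rfl⟩ := Ext.addEquiv₀.symm.surjective y
  refine ⟨b.hom, ?_⟩
  simp only [Ext.addEquiv₀_symm_apply, Ext.mk₀_comp_mk₀] at hy
  have := (Ext.mk₀_bijective _ _).1 hy
  exact congrArg ModuleCat.Hom.hom this

/-- Maps `A → N` extend along `A → B` when `Ext¹(C, N) = 0`. -/
lemma EV.extend (h3 : EV R C N 1) (a : A →ₗ[R] N) : ∃ b : B →ₗ[R] N, b ∘ₗ f = a := by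
  obtain ⟨y, hy⟩ := Ext.contravariant_sequence_exact₁ (ses hf hg h) (ModuleCat.of R N)
    (Ext.mk₀ (ModuleCat.ofHom a)) (add_zero 1) (@Subsingleton.elim _ h3 _ _)
  obtain ⟨b, rfl⟩ := Ext.addEquiv₀.symm.surjective y
  refine ⟨b.hom, ?_⟩
  simp only [Ext.addEquiv₀_symm_apply, Ext.mk₀_comp_mk₀] at hy
  have := (Ext.mk₀_bijective _ _).1 hy
  exact congrArg ModuleCat.Hom.hom this

/-- If every map `A → N` extends to `B` and `Ext¹(B, N) = 0`, then `Ext¹(C, N) = 0`. -/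
lemma EV.of_extend (h2 : EV R B N 1) (he : ∀ a : A →ₗ[R] N, ∃ b : B →ₗ[R] N, b ∘ₗ f = a) :
    EV R C N 1 := by
  refine subsingleton_of_forall_eq 0 fun x => ?_
  obtain ⟨y, rfl⟩ := Ext.contravariant_sequence_exact₃ (ses hf hg h) (ModuleCat.of R N) x
    (@Subsingleton.elim _ h2 _ _) (add_zero 1)
  obtain ⟨a, rfl⟩ := Ext.addEquiv₀.symm.surjective y
  obtain ⟨b, hb⟩ := he a.hom
  have : Ext.addEquiv₀.symm a = (Ext.mk₀ (ModuleCat.ofHom f)).comp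
      (Ext.mk₀ (ModuleCat.ofHom b)) (add_zero 0) := by
    rw [Ext.mk₀_comp_mk₀, Ext.addEquiv₀_symm_apply]
    congr 1
    ext1
    exact hb.symm
  rw [this]
  exact (ses hf hg h).extClass_comp_assoc _

end cov

lemma EV.of_subsingleton_left [Subsingleton M] (i : ℕ) : EV R M N i := by
  have : Limits.IsZero (ModuleCat.of R M) := ModuleCat.isZero_of_subsingleton _
  refine subsingleton_of_forall_eq 0 fun x => ?_
  rw [← Ext.mk₀_id_comp x, this.eq_of_src (𝟙 _) 0, Ext.mk₀_zero, Ext.zero_comp]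

lemma EV.of_subsingleton_right [Subsingleton N] (i : ℕ) : EV R M N i := by
  have : Limits.IsZero (ModuleCat.of R N) := ModuleCat.isZero_of_subsingleton _
  refine subsingleton_of_forall_eq 0 fun x => ?_
  rw [← Ext.comp_mk₀_id x, this.eq_of_src (𝟙 _) 0, Ext.mk₀_zero, Ext.comp_zero]

lemma EV.congr_right (e : A ≃ₗ[R] B) {i : ℕ} (h : EV R M A i) : EV R M B i :=
  EV.cov₂ (f := e.toLinearMap) (g := (0 : B →ₗ[R] PUnit.{v+1})) e.injective
    (fun _ => ⟨0, Subsingleton.elim _ _⟩) (fun b => by simp) h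
    (EV.of_subsingleton_right i)

lemma EV.congr_left (e : A ≃ₗ[R] B) {i : ℕ} (h : EV R A N i) : EV R B N i :=
  EV.con₂ (f := e.toLinearMap) (g := (0 : B →ₗ[R] PUnit.{v+1})) e.injective
    (fun _ => ⟨0, Subsingleton.elim _ _⟩) (fun b => by simp) h
    (EV.of_subsingleton_left i)

lemma EV.of_projective [Module.Projective R M] (i : ℕ) : EV R M N (i + 1) :=
  have : Projective (ModuleCat.of R M) := (IsProjective.iff_projective M).1 inferInstance
  Ext.subsingleton_of_projective _ _ _

lemma EV.prod {i : ℕ} (h1 : EV R M A i) (h2 : EV R M B i) : EV R M (A × B) i :=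
  EV.cov₂ (f := LinearMap.inl R A B) (g := LinearMap.snd R A B) LinearMap.inl_injective
    Prod.snd_surjective (fun x => by simp [Prod.ext_iff, eq_comm]) h1 h2

lemma EV.pi_fin {i : ℕ} (h : EV R M A i) (n : ℕ) : EV R M (Fin n → A) i := by
  induction n with
  | zero => exact EV.of_subsingleton_right i
  | succ n ih => exact (h.prod ih).congr_right (Fin.consLinearEquiv R (fun _ => A))


/-! ### Depth through vanishing of Ext -/

section depth

variable [IsLocalRing R]

/-- `Ext^i(k, N) = 0` for all `i < n`, where `k` is the residue field; for `N` finitely generated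
over a noetherian ring this says `n ≤ depth N`. -/
def DepthGE (R : Type v) [CommRing R] [IsLocalRing R] (N : Type v) [AddCommGroup N] [Module R N]
    (n : ℕ) : Prop := ∀ i < n, EV R (ResidueField R) N i

/-- `n` is the least degree with `Ext^n(k, N) ≠ 0`, where `k` is the residue field. -/
def DepthEq (R : Type v) [CommRing R] [IsLocalRing R] (N : Type v) [AddCommGroup N] [Module R N]
    (n : ℕ) : Prop := DepthGE R N n ∧ ¬ EV R (ResidueField R) N n

lemma DepthEq.congr (e : A ≃ₗ[R] B) {n : ℕ} (h : DepthEq R A n) : DepthEq R B n :=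
  ⟨fun i hi => (h.1 i hi).congr_right e, fun h' => h.2 (h'.congr_right e.symm)⟩

lemma mem_annihilator_residueField {x : R} (hx : x ∈ maximalIdeal R) :
    x ∈ Module.annihilator R (ResidueField R) := by
  rw [Module.mem_annihilator]
  intro m
  rw [Algebra.smul_def, ResidueField.algebraMap_eq, (residue_eq_zero_iff x).2 hx, zero_mul]

/-- A regular element of the maximal ideal acts injectively on `Ext(k, N)` if `Ext(k, N / xN)`
vanishes one degree below; since it also acts as zero, `Ext(k, N)` vanishes. -/
lemma EV.succ_of_quot {x : R} (hx : x ∈ maximalIdeal R) {p : A →ₗ[R] B}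
    (hr : IsSMulRegular A x) (hp : Function.Surjective p)
    (h : Function.Exact (LinearMap.lsmul R A x) p) {i : ℕ}
    (hB : EV R (ResidueField R) B i) : EV R (ResidueField R) A (i + 1) := by
  refine subsingleton_of_forall_eq 0 fun y => ?_
  have hz : y.comp (Ext.mk₀ (ModuleCat.ofHom (LinearMap.lsmul R A x))) (add_zero (i + 1)) = 0 := by
    have e : ModuleCat.ofHom (LinearMap.lsmul R A x) = x • 𝟙 (ModuleCat.of R A) := rfl
    have e' : x • 𝟙 (ModuleCat.of R (ResidueField R)) = 0 := by
      ext m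
      exact Module.mem_annihilator.1 (mem_annihilator_residueField hx) m
    have hy : x • y = (Ext.mk₀ (x • 𝟙 (ModuleCat.of R (ResidueField R)))).comp y (zero_add _) := by
      simp [Ext.mk₀_smul]
    rw [e, Ext.mk₀_smul, Ext.comp_smul, Ext.comp_mk₀_id, hy, e', Ext.mk₀_zero, Ext.zero_comp]
  obtain ⟨z, rfl⟩ := Ext.covariant_sequence_exact₁ (ModuleCat.of R (ResidueField R))
    (ses (f := LinearMap.lsmul R A x) hr hp h) y hz rfl
  rw [@Subsingleton.elim _ hB z 0, Ext.zero_comp]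

lemma EV.zero_of_regular {x : R} (hx : x ∈ maximalIdeal R) (hr : IsSMulRegular A x) :
    EV R (ResidueField R) A 0 :=
  EV_zero_iff.2 (IsSMulRegular.linearMap_subsingleton_of_mem_annihilator hr
    (mem_annihilator_residueField hx))

section shift
variable {x : R} (hx : x ∈ maximalIdeal R) {p : A →ₗ[R] B} (hr : IsSMulRegular A x)
  (hp : Function.Surjective p) (h : Function.Exact (LinearMap.lsmul R A x) p)
include hx hr hp h

omit hx in
lemma DepthGE.quot {n : ℕ} (hA : DepthGE R A (n + 1)) : DepthGE R B n := fun i hi =>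
  EV.cov₃ (f := LinearMap.lsmul R A x) hr hp h (hA i (by omega)) (hA (i + 1) (by omega))

lemma DepthEq.quot {n : ℕ} (hA : DepthEq R A (n + 1)) : DepthEq R B n :=
  ⟨hA.1.quot hr hp h, fun h' => hA.2 (h'.succ_of_quot hx hr hp h)⟩

lemma DepthEq.of_quot {n : ℕ} (hB : DepthEq R B n) : DepthEq R A (n + 1) := by
  have hA : DepthGE R A (n + 1) := by
    intro i hi
    rcases i with _ | i
    · exact EV.zero_of_regular hx hr
    · exact (hB.1 i (by omega)).succ_of_quot hx hr hp h
  exact ⟨hA, fun h' => hB.2 (EV.cov₃ (f := LinearMap.lsmul R A x) hr hp h (hA n (by omega)) h')⟩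

end shift

variable [IsNoetherianRing R]

omit [IsNoetherianRing R] in
lemma maximalIdeal_smul_lt [Module.Finite R N] [Nontrivial N] :
    maximalIdeal R • (⊤ : Submodule R N) < ⊤ := by
  refine lt_top_iff_ne_top.2 fun h => ?_
  exact top_ne_bot (Submodule.eq_bot_of_le_smul_of_le_jacobson_bot (maximalIdeal R) ⊤
    Module.Finite.fg_top h.ge (maximalIdeal_le_jacobson _) : (⊤ : Submodule R N) = ⊥)

/-- Rees' theorem for the maximal ideal. -/
lemma depthGE_iff [Module.Finite R N] [Nontrivial N] (n : ℕ) :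
    DepthGE R N n ↔ ∃ rs : List R, rs.length = n ∧ (∀ r ∈ rs, r ∈ maximalIdeal R) ∧
      IsRegular N rs := by
  have hs : Module.support R (ResidueField R) =
      PrimeSpectrum.zeroLocus (maximalIdeal R : Set R) := by
    change Module.support R (R ⧸ maximalIdeal R) = _
    rw [Module.support_eq_zeroLocus, Ideal.annihilator_quotient]
  have : Module.Finite R (ResidueField R) :=
    inferInstanceAs (Module.Finite R (R ⧸ maximalIdeal R))
  constructor
  · intro h
    exact ModuleCat.exists_isRegular_of_exists_subsingleton_ext (maximalIdeal R) n
      (ModuleCat.of R N) maximalIdeal_smul_lt (ModuleCat.of R (ResidueField R)) hs h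
  · rintro ⟨rs, rfl, h1, h2⟩
    exact ModuleCat.subsingleton_ext_of_exists_isRegular (maximalIdeal R)
      (ModuleCat.of R (ResidueField R)) hs.subset
      (ModuleCat.of R N) maximalIdeal_smul_lt rs h1 h2

/-- The least degree with `Ext(k, N) ≠ 0` is the supremum of the lengths of regular sequences. -/
lemma DepthEq.rdepth_eq [Module.Finite R N] [Nontrivial N] {n : ℕ} (h : DepthEq R N n) :
    rdepth R N = n := by
  apply le_antisymm
  · refine sSup_le ?_
    rintro _ ⟨rs, h1, h2, rfl⟩
    by_contra hlt
    have hlt : n < rs.length := by simpa using hlt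
    exact h.2 ((depthGE_iff rs.length).2 ⟨rs, rfl, h1, h2⟩ n hlt)
  · obtain ⟨rs, rfl, h1, h2⟩ := (depthGE_iff n).1 h.1
    exact le_sSup ⟨rs, h1, h2, rfl⟩

/-- The depth of a noetherian local ring is finite, being at most its Krull dimension. -/
lemma exists_depthEq : ∃ d, DepthEq R R d := by
  by_contra! hcon
  have hall : ∀ n, DepthGE R R n := by
    intro n
    induction n with
    | zero => intro i hi; omega
    | succ n ih =>
      intro i hi
      rcases Nat.lt_succ_iff_lt_or_eq.1 hi with hi | rfl
      · exact ih i hi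
      · by_contra h; exact hcon _ ⟨ih, h⟩
  obtain ⟨d, hd⟩ : ∃ d : ℕ, ringKrullDim R = d := by
    have h1 := ringKrullDim_lt_top (R := R)
    have h2 := ringKrullDim_ne_bot (R := R)
    generalize ringKrullDim R = a at h1 h2
    induction a with
    | bot => exact absurd rfl h2
    | coe a =>
      induction a with
      | top => exact absurd h1 (lt_irrefl _)
      | coe a => exact ⟨a, rfl⟩
  obtain ⟨rs, hl, -, h2⟩ := (depthGE_iff (d + 1)).1 (hall (d + 1))
  have hq : Nontrivial (R ⧸ Ideal.ofList rs) := by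
    rw [Ideal.Quotient.nontrivial_iff]
    intro h
    apply h2.2
    simp [h]
  have := ringKrullDim_add_length_eq_ringKrullDim_of_isRegular rs h2
  rw [hd, hl] at this
  have h0 : (0 : WithBot ℕ∞) ≤ ringKrullDim (R ⧸ Ideal.ofList rs) := ringKrullDim_nonneg_of_nontrivial
  have h3 : ((d + 1 : ℕ) : WithBot ℕ∞) ≤ (d : ℕ) := by
    calc ((d + 1 : ℕ) : WithBot ℕ∞) = 0 + ((d + 1 : ℕ) : WithBot ℕ∞) := (zero_add _).symm
      _ ≤ _ := by gcongr
      _ = _ := this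
  have : d + 1 ≤ d := by exact_mod_cast h3
  omega

lemma exists_regular [Module.Finite R N] [Nontrivial N] {n : ℕ} (h : DepthGE R N (n + 1)) :
    ∃ x ∈ maximalIdeal R, IsSMulRegular N x := by
  obtain ⟨rs, h1, h2, h3⟩ := (depthGE_iff _).1 h
  match rs with
  | [] => simp at h1
  | x :: rs => exact ⟨x, h2 x (by simp), ((isRegular_cons_iff N x rs).1 h3).1⟩


/-! ### Depth and Hom -/

omit [IsNoetherianRing R] in
/-- Over a local ring a nonzero finitely generated module surjects onto the residue field. -/
lemma exists_to_residueField [Module.Finite R C] [Nontrivial C] :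
    ∃ π : C →ₗ[R] ResidueField R, Function.Surjective π := by
  obtain ⟨W, hW, -⟩ := (eq_top_or_exists_le_coatom (⊥ : Submodule R C)).resolve_left bot_ne_top
  have : IsSimpleModule R (C ⧸ W) := isSimpleModule_iff_isCoatom.2 hW
  obtain ⟨I, hI, ⟨e⟩⟩ := isSimpleModule_iff_quot_maximal.1 this
  obtain rfl := IsLocalRing.eq_maximalIdeal hI
  exact ⟨e.toLinearMap ∘ₗ W.mkQ, e.surjective.comp W.mkQ_surjective⟩

section homquot
variable {x : R} {p : M →ₗ[R] N} (hr : IsSMulRegular M x)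
  (hp : Function.Surjective p) (h : Function.Exact (LinearMap.lsmul R M x) p)
include hr hp h

omit [IsLocalRing R] [IsNoetherianRing R] in
lemma EV.quot_right {i : ℕ} (h1 : EV R C M i) (h2 : EV R C M (i + 1)) : EV R C N i :=
  EV.cov₃ (f := LinearMap.lsmul R M x) hr hp h h1 h2

omit [IsLocalRing R] [IsNoetherianRing R] in
lemma compRight_surjective (h1 : EV R C M 1) :
    Function.Surjective (LinearMap.compRight R (M := C) p) := fun c =>
  EV.lift (f := LinearMap.lsmul R M x) hr hp h h1 c

omit [IsLocalRing R] [IsNoetherianRing R] in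
omit [IsLocalRing R] [IsNoetherianRing R] hp in
lemma compRight_exact :
    Function.Exact (LinearMap.lsmul R (C →ₗ[R] M) x) (LinearMap.compRight R (M := C) p) := by
  intro c
  constructor
  · intro hc
    have hc' : ∀ y, ∃ z, x • z = c y := fun y => (h (c y)).1 (LinearMap.congr_fun hc y)
    choose z hz using hc'
    refine ⟨{ toFun := z, map_add' := ?_, map_smul' := ?_ }, ?_⟩
    · intro a b
      apply hr
      simp only [smul_add, hz, map_add]
    · intro a b
      apply hr
      simp only [hz, map_smul, RingHom.id_apply, smul_comm x a]
    · ext y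
      exact hz y
  · rintro ⟨b, rfl⟩
    ext y
    exact (h _).2 ⟨b y, rfl⟩

omit [IsLocalRing R] [IsNoetherianRing R] hp h p in
lemma hom_isSMulRegular : IsSMulRegular (C →ₗ[R] M) x := by
  intro a b hab
  ext y
  exact hr (LinearMap.congr_fun hab y)

end homquot

omit [IsNoetherianRing R] in
lemma quot_nontrivial [Module.Finite R N] [Nontrivial N] {x : R} (hx : x ∈ maximalIdeal R) :
    Nontrivial (N ⧸ (x • (⊤ : Submodule R N))) :=
  nontrivial_quotSMulTop_of_mem_maximalIdeal N hx

/-- If `Ext^i(C, N) = 0` for `i > 0`, then `Hom(C, N)` has the same depth as `N`: killing a regular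
element of `N` commutes with `Hom(C, -)`, and in depth zero a nonzero map `k → N` produces a nonzero
map `k → Hom(C, N)` via a surjection `C → k`. -/
lemma DepthEq.hom [Module.Finite R C] [Nontrivial C] {d : ℕ} :
    ∀ {N : Type v} [AddCommGroup N] [Module R N] [Module.Finite R N] [Nontrivial N],
      (∀ i, EV R C N (i + 1)) → DepthEq R N d → DepthEq R (C →ₗ[R] N) d := by
  induction d with
  | zero =>
    intro N _ _ _ _ _ hd
    refine ⟨fun i hi => by omega, fun h0 => hd.2 ?_⟩
    rw [EV_zero_iff] at h0 ⊢
    refine subsingleton_of_forall_eq 0 fun s => ?_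
    obtain ⟨π, hπ⟩ := exists_to_residueField (R := R) (C := C)
    let T : ResidueField R →ₗ[R] C →ₗ[R] N :=
      ((LinearMap.mul R (ResidueField R)).compl₁₂ LinearMap.id π).compr₂ s
    have hT : T = 0 := Subsingleton.elim _ _
    ext a
    obtain ⟨c, rfl⟩ := hπ a
    have := LinearMap.congr_fun (LinearMap.congr_fun hT 1) c
    simpa [T] using this
  | succ d ih =>
    intro N _ _ _ _ hC hd
    obtain ⟨x, hx, hr⟩ := exists_regular hd.1
    have hp := (x • (⊤ : Submodule R N)).mkQ_surjective
    have h := LinearMap.exact_lsmul_mkQ_smul_top N x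
    have := quot_nontrivial (N := N) hx
    exact DepthEq.of_quot hx (hom_isSMulRegular hr) (compRight_surjective hr hp h (hC 0))
      (compRight_exact hr h)
      (ih (fun i => (hC i).quot_right hr hp h (hC (i + 1))) (hd.quot hx hr hp h))

/-- Suppose `Ext^i(B, N) = 0 = Ext^i(C, N)` for `i > 0` and that `φ : B → C` induces an injection
`Hom(C, N) → Hom(B, N)` whose cokernel has depth at least `depth N`. Then `φ` is surjective.
Reducing modulo an element regular on `N` and on the cokernel, one arrives at `depth N = 0`, where
a nonzero quotient `C / φ(B)` would give a nonzero element `C → k → N` of the kernel. -/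
lemma surjective_of_depthGE [Module.Finite R B] [Module.Finite R C] (φ : B →ₗ[R] C) {d : ℕ} :
    ∀ {N : Type v} [AddCommGroup N] [Module R N] [Module.Finite R N] [Nontrivial N],
      (∀ i, EV R B N (i + 1)) → (∀ i, EV R C N (i + 1)) → DepthEq R N d →
      Function.Injective (LinearMap.lcomp R N φ) →
      DepthGE R ((B →ₗ[R] N) ⧸ LinearMap.range (LinearMap.lcomp R N φ)) d →
      Function.Surjective φ := by
  induction d with
  | zero =>
    intro N _ _ _ _ _ _ hd hinj _
    rw [← LinearMap.range_eq_top]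
    by_contra hne
    have : Nontrivial (C ⧸ LinearMap.range φ) := Submodule.Quotient.nontrivial_iff.2 hne
    obtain ⟨π, hπ⟩ := exists_to_residueField (R := R) (C := C ⧸ LinearMap.range φ)
    refine hd.2 (EV_zero_iff.2 (subsingleton_of_forall_eq 0 fun s => ?_))
    have h0 : s ∘ₗ π ∘ₗ (LinearMap.range φ).mkQ = 0 := by
      apply hinj
      ext b
      have : (LinearMap.range φ).mkQ (φ b) = 0 := by simp
      simp [this]
    ext a
    obtain ⟨c, rfl⟩ := hπ a
    obtain ⟨c, rfl⟩ := (LinearMap.range φ).mkQ_surjective c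
    exact LinearMap.congr_fun h0 c
  | succ d ih =>
    intro N _ _ _ _ hB hC hd hinj hL
    set L := (B →ₗ[R] N) ⧸ LinearMap.range (LinearMap.lcomp R N φ) with hLdef
    obtain ⟨x, hx, hr'⟩ := exists_regular (N := N × L) (n := d)
      (fun i hi => (hd.1 i hi).prod (hL i hi))
    have hr : IsSMulRegular N x := fun a b hab =>
      congrArg Prod.fst (@hr' (a, 0) (b, 0) (Prod.ext hab rfl))
    have hrL : IsSMulRegular L x := fun a b hab =>
      congrArg Prod.snd (@hr' (0, a) (0, b) (Prod.ext rfl hab))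
    let p := (x • (⊤ : Submodule R N)).mkQ
    have hp : Function.Surjective p := (x • (⊤ : Submodule R N)).mkQ_surjective
    have h : Function.Exact (LinearMap.lsmul R N x) p := LinearMap.exact_lsmul_mkQ_smul_top N x
    have := quot_nontrivial (N := N) hx
    have hsB := compRight_surjective hr hp h (hB 0)
    have hsC := compRight_surjective hr hp h (hC 0)
    have hle : LinearMap.range (LinearMap.lcomp R N φ) ≤
        (LinearMap.range (LinearMap.lcomp R (N ⧸ (x • (⊤ : Submodule R N))) φ)).comap
          (LinearMap.compRight R p) := by
      rintro _ ⟨c, rfl⟩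
      exact ⟨p ∘ₗ c, rfl⟩
    refine ih (N := N ⧸ (x • (⊤ : Submodule R N)))
      (fun i => (hB i).quot_right hr hp h (hB (i + 1)))
      (fun i => (hC i).quot_right hr hp h (hC (i + 1))) (hd.quot hx hr hp h) ?_ ?_
    · rw [injective_iff_map_eq_zero]
      intro c hc
      obtain ⟨c, rfl⟩ := hsC c
      -- `c ∘ φ` vanishes modulo `x`, hence equals `x • b`; the class of `b` in `L` is killed by `x`
      obtain ⟨b, hb⟩ := (compRight_exact hr h (c ∘ₗ φ)).1 hc
      have hbL : (LinearMap.range (LinearMap.lcomp R N φ)).mkQ b = 0 := by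
        apply hrL
        change x • (LinearMap.range (LinearMap.lcomp R N φ)).mkQ b = x • (0 : L)
        rw [smul_zero, ← map_smul]
        exact (Submodule.Quotient.mk_eq_zero _).2 ⟨c, hb.symm⟩
      obtain ⟨c', rfl⟩ := (Submodule.Quotient.mk_eq_zero _).1 hbL
      have : c = x • c' := hinj (by rw [map_smul]; exact hb.symm)
      rw [this]
      exact (compRight_exact hr h _).2 ⟨c', rfl⟩
    · refine DepthGE.quot (p := Submodule.mapQ _ _ (LinearMap.compRight R p) hle) hrL ?_ ?_ hL
      · intro y
        obtain ⟨y, rfl⟩ := Submodule.mkQ_surjective _ y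
        obtain ⟨b, rfl⟩ := hsB y
        exact ⟨Submodule.Quotient.mk b, rfl⟩
      · intro y
        obtain ⟨b, rfl⟩ := Submodule.mkQ_surjective _ y
        constructor
        · intro hy
          obtain ⟨c, hc⟩ := (Submodule.Quotient.mk_eq_zero _).1 hy
          obtain ⟨c, rfl⟩ := hsC c
          obtain ⟨b', hb'⟩ := (compRight_exact hr h (b - c ∘ₗ φ)).1 (by
            rw [map_sub, sub_eq_zero]
            exact hc.symm)
          refine ⟨Submodule.Quotient.mk b', ?_⟩
          have : b = x • b' + c ∘ₗ φ := by
            rw [← sub_eq_iff_eq_add]; exact hb'.symm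
          rw [this, map_add]
          have h0 : (LinearMap.range (LinearMap.lcomp R N φ)).mkQ (c ∘ₗ φ) = 0 :=
            (Submodule.Quotient.mk_eq_zero _).2 ⟨c, rfl⟩
          rw [h0, add_zero]
          rfl
        · rintro ⟨z, hz⟩
          obtain ⟨b', rfl⟩ := Submodule.mkQ_surjective _ z
          rw [← hz]
          have : (LinearMap.compRight R (M := B) p) (x • b') = 0 :=
            (compRight_exact hr h _).2 ⟨b', rfl⟩
          change Submodule.Quotient.mk (LinearMap.compRight R p (x • b')) = _
          rw [this]
          rfl

end depth

/-! ### Totally reflexive modules -/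

lemma IsTotallyReflexive.ev (h : IsTotallyReflexive R A) (i : ℕ) : EV R A R (i + 1) :=
  (extVanishes_succ_iff i).1 (h.2.1 (i + 1) i.succ_pos)

lemma IsTotallyReflexive.ev_dual (h : IsTotallyReflexive R A) (i : ℕ) :
    EV R (A →ₗ[R] R) R (i + 1) :=
  (extVanishes_succ_iff i).1 (h.2.2 (i + 1) i.succ_pos)

lemma isTotallyReflexive_of (h : Function.Bijective (Module.Dual.eval R A))
    (h1 : ∀ i, EV R A R (i + 1)) (h2 : ∀ i, EV R (A →ₗ[R] R) R (i + 1)) :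
    IsTotallyReflexive R A := by
  refine ⟨h, fun n hn => ?_, fun n hn => ?_⟩ <;>
    obtain ⟨i, rfl⟩ := Nat.exists_eq_succ_of_ne_zero hn.ne'
  · exact (extVanishes_succ_iff i).2 (h1 i)
  · exact (extVanishes_succ_iff i).2 (h2 i)

lemma isTotallyReflexive_of_subsingleton [Subsingleton A] : IsTotallyReflexive R A := by
  have : Subsingleton (A →ₗ[R] R) := ⟨fun a b => by ext x; simp [Subsingleton.elim x 0]⟩
  have : Subsingleton (Module.Dual R (Module.Dual R A)) :=
    ⟨fun a b => by ext x; rw [@Subsingleton.elim (A →ₗ[R] R) _ x 0, map_zero, map_zero]⟩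
  exact isTotallyReflexive_of
    ⟨fun a b _ => Subsingleton.elim _ _, fun a => ⟨0, Subsingleton.elim _ _⟩⟩
    (fun i => EV.of_subsingleton_left _) (fun i => EV.of_subsingleton_left _)

/-- In a short exact sequence `0 → A → B → C → 0` with `A`, `B` totally reflexive and
`B* → A*` surjective, `C` is totally reflexive: the dual sequence is exact, its terms have no
higher `Ext` into `R`, so dualizing again gives an exact sequence to which the five lemma applies. -/
lemma isTotallyReflexive_coker {f : A →ₗ[R] B} {g : B →ₗ[R] C} (hf : Function.Injective f)
    (hg : Function.Surjective g) (h : Function.Exact f g) (hA : IsTotallyReflexive R A)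
    (hB : IsTotallyReflexive R B) (hs : Function.Surjective (LinearMap.lcomp R R f)) :
    IsTotallyReflexive R C := by
  have hginj : Function.Injective (LinearMap.lcomp R R g) := fun a b hab => by
    ext c
    obtain ⟨y, rfl⟩ := hg c
    exact LinearMap.congr_fun hab y
  have hex : Function.Exact (LinearMap.lcomp R R g) (LinearMap.lcomp R R f) :=
    LinearMap.exact_lcomp_of_exact_of_surjective (N := R) h hg
  refine isTotallyReflexive_of ⟨?_, ?_⟩ ?_ ?_
  · rw [injective_iff_map_eq_zero]
    intro c hc
    obtain ⟨y, rfl⟩ := hg c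
    -- evaluation at `y` kills the image of `C*`, so it descends to `A*`, where it is evaluation
    -- at some `z` in `A`
    have hy : LinearMap.ker (LinearMap.lcomp R R f) ≤ LinearMap.ker (Module.Dual.eval R B y) := by
      intro b hb
      obtain ⟨c, rfl⟩ := (hex b).1 hb
      exact LinearMap.congr_fun hc c
    obtain ⟨z, hz⟩ := hA.1.2 ((Submodule.liftQ _ _ hy) ∘ₗ
      (LinearMap.quotKerEquivOfSurjective _ hs).symm.toLinearMap)
    have : y = f z := by
      apply hB.1.1
      ext b
      have := LinearMap.congr_fun hz (LinearMap.lcomp R R f b)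
      have e : (LinearMap.quotKerEquivOfSurjective _ hs).symm (LinearMap.lcomp R R f b) =
          Submodule.Quotient.mk b := by
        rw [LinearEquiv.symm_apply_eq]; rfl
      simp only [LinearMap.comp_apply, LinearEquiv.coe_coe] at this
      rw [e] at this
      exact this.symm
    rw [this]
    exact (h _).2 ⟨z, rfl⟩
  · intro a
    obtain ⟨b, hb⟩ := EV.extend hginj hs hex (hA.ev_dual 0) a
    obtain ⟨y, rfl⟩ := hB.1.2 b
    exact ⟨g y, by rw [← hb]; rfl⟩
  · intro i
    cases i with
    | zero => exact EV.of_extend hf hg h (hB.ev 0) hs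
    | succ i => exact EV.con₃ hf hg h (hA.ev i) (hB.ev (i + 1))
  · intro i
    exact EV.con₁ hginj hs hex (hB.ev_dual i) (hA.ev_dual (i + 1))

lemma exact_ker_subtype (f : A →ₗ[R] B) :
    Function.Exact (LinearMap.ker f).subtype f := fun y => by simp

/-! ### Modules of finite G-dimension -/

/-- `Ext^j(M, R) = 0` for `j > n` when `G-dim M ≤ n`; here `j = i + 1`. -/
lemma GdimLE.ev {n : ℕ} : ∀ {M : ModuleCat.{v} R}, GdimLE R n M →
    ∀ i, n ≤ i → EV R M R (i + 1) := by
  induction n with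
  | zero => exact fun h i _ => IsTotallyReflexive.ev h i
  | succ n ih =>
    rintro M ⟨G, -, hG, f, hf, hK⟩ i hi
    obtain ⟨i, rfl⟩ := Nat.exists_eq_add_of_le' (show 1 ≤ i by omega)
    exact EV.con₃ (LinearMap.ker f).injective_subtype hf (exact_ker_subtype f)
      (ih hK i (by omega)) (hG.ev _)

section
variable [IsLocalRing R] [IsNoetherianRing R]

/-- A nonzero totally reflexive module has the depth of the ring, as `A ≅ Hom(A*, R)`. -/
lemma IsTotallyReflexive.depthEq [Module.Finite R A] [Nontrivial A] (h : IsTotallyReflexive R A)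
    {d : ℕ} (hd : DepthEq R R d) : DepthEq R A d := by
  let e : A ≃ₗ[R] ((A →ₗ[R] R) →ₗ[R] R) := LinearEquiv.ofBijective _ h.1
  have : Nontrivial (A →ₗ[R] R) := by
    by_contra hn
    rw [not_nontrivial_iff_subsingleton] at hn
    have : Subsingleton ((A →ₗ[R] R) →ₗ[R] R) :=
      ⟨fun a b => by ext x; rw [@Subsingleton.elim (A →ₗ[R] R) _ x 0, map_zero, map_zero]⟩
    exact not_subsingleton A e.toEquiv.subsingleton
  exact (DepthEq.hom (fun i => h.ev_dual i) hd).congr e.symm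

omit [IsLocalRing R] in
lemma finite_dual [Module.Finite R A] : Module.Finite R (A →ₗ[R] R) := inferInstance

/-- The Auslander–Bridger formula, with `n` the G-dimension of `M`. -/
lemma auslander_bridger {d : ℕ} (hd : DepthEq R R d) {n : ℕ} :
    ∀ {M : ModuleCat.{v} R} [Module.Finite R M] [Nontrivial M], GdimLE R n M →
      (∀ m < n, ¬ GdimLE R m M) → ∃ e, DepthEq R M e ∧ e + n = d := by
  induction n with
  | zero => exact fun h _ => ⟨d, IsTotallyReflexive.depthEq h hd, rfl⟩
  | succ n ih =>
    rintro M _ _ ⟨G, hGf, hG, f, hf, hK⟩ hmin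
    have hKf : Module.Finite R (LinearMap.ker f) := inferInstance
    have hinj := (LinearMap.ker f).injective_subtype
    have hex := exact_ker_subtype f
    have hKmin : ∀ m < n, ¬ GdimLE R m (ModuleCat.of R (LinearMap.ker f)) := fun m hm hKm =>
      hmin (m + 1) (by omega) ⟨G, hGf, hG, f, hf, hKm⟩
    have : Nontrivial G := hf.nontrivial
    have hGd := hG.depthEq hd
    -- otherwise `M` would be totally reflexive
    have hres : IsTotallyReflexive R (LinearMap.ker f) →
        ¬ Function.Surjective (LinearMap.lcomp R R (LinearMap.ker f).subtype) := fun h0 hs =>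
      hmin 0 n.succ_pos (isTotallyReflexive_coker hinj hf hex h0 hG hs)
    have hKnt : Nontrivial (LinearMap.ker f) := by
      by_contra hn
      rw [not_nontrivial_iff_subsingleton] at hn
      refine hres isTotallyReflexive_of_subsingleton fun a => ⟨0, ?_⟩
      ext x
      simp [Subsingleton.elim x 0]
    obtain ⟨e, he, hed⟩ := ih (M := ModuleCat.of R (LinearMap.ker f)) hK hKmin
    change DepthEq R (LinearMap.ker f) e at he
    cases n with
    | zero =>
      obtain rfl : e = d := by omega
      change IsTotallyReflexive R (LinearMap.ker f) at hK
      have hM : ∀ i, i + 1 < e → EV R (ResidueField R) M i := fun i hi =>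
        EV.cov₃ hinj hf hex (hGd.1 i (by omega)) (he.1 (i + 1) hi)
      have hnot : ¬ DepthGE R M e := by
        intro hMe
        set r := LinearMap.lcomp R R (LinearMap.ker f).subtype with hr
        -- the double duals of `K` and `G` are `K` and `G`, so the dual of `r` is `K → G`
        have hsq : ∀ x : LinearMap.ker f,
            LinearMap.lcomp R R r (Module.Dual.eval R (LinearMap.ker f) x) =
              Module.Dual.eval R G x := fun x => rfl
        have := finite_dual (R := R) (A := G)
        have := finite_dual (R := R) (A := LinearMap.ker f)
        refine hres hK (surjective_of_depthGE r hG.ev_dual hK.ev_dual hd ?_ ?_)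
        · intro a b hab
          obtain ⟨x, rfl⟩ := hK.1.2 a
          obtain ⟨y, rfl⟩ := hK.1.2 b
          rw [hsq, hsq] at hab
          rw [Subtype.ext (hG.1.1 hab)]
        · let eG := LinearEquiv.ofBijective _ hG.1
          have hmap : (LinearMap.ker f).map eG.toLinearMap =
              LinearMap.range (LinearMap.lcomp R R r) := by
            ext z
            constructor
            · rintro ⟨x, hx, rfl⟩
              exact ⟨Module.Dual.eval R _ ⟨x, hx⟩, rfl⟩
            · rintro ⟨a, rfl⟩
              obtain ⟨x, rfl⟩ := hK.1.2 a
              exact ⟨x, x.2, rfl⟩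
          exact fun i hi => (hMe i hi).congr_right
            ((LinearMap.quotKerEquivOfSurjective f hf).symm.trans
              (Submodule.Quotient.equiv _ _ eG hmap))
      cases e with
      | zero => exact (hnot fun i hi => by omega).elim
      | succ e =>
        refine ⟨e, ⟨fun i hi => hM i (by omega), fun h => hnot fun i hi => ?_⟩, rfl⟩
        rcases Nat.lt_succ_iff_lt_or_eq.1 hi with h' | rfl
        · exact hM i (by omega)
        · exact h
    | succ n =>
      cases e with
      | zero =>
        refine (he.2 (EV_zero_iff.2 ⟨fun a b => ?_⟩)).elim
        have := EV_zero_iff.1 (hGd.1 0 (by omega))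
        have h' : (LinearMap.ker f).subtype ∘ₗ a = (LinearMap.ker f).subtype ∘ₗ b :=
          Subsingleton.elim _ _
        ext x
        exact LinearMap.congr_fun h' x
      | succ e =>
        refine ⟨e, ⟨fun i hi => ?_, fun h => ?_⟩, by omega⟩
        · exact EV.cov₃ hinj hf hex (hGd.1 i (by omega)) (he.1 (i + 1) (by omega))
        · exact he.2 (EV.cov₁ hinj hf hex h (hGd.1 (e + 1) (by omega)))

end

/-! ### The invariant `P_R(M)` -/

/-- Membership in `M^⊥` only involves positive degrees, where the two models of `Ext` agree. -/
lemma memPerp_iff : MemPerp R M N ↔ ∃ d, ∀ i ≥ d, EV R M N (i + 1) := by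
  constructor
  · rintro ⟨d, hd⟩
    exact ⟨d, fun i hi => (extVanishes_succ_iff i).1 (hd _ (by omega))⟩
  · rintro ⟨d, hd⟩
    refine ⟨d + 1, fun n hn => ?_⟩
    obtain ⟨i, rfl⟩ := Nat.exists_eq_add_of_le' (show 1 ≤ n by omega)
    exact (extVanishes_succ_iff i).2 (hd i (by omega))

lemma le_extPsup [Module.Finite R N] (hN : MemPerp R M N) {i : ℕ} (h : ¬ EV R M N (i + 1)) :
    (((i + 1 : ℕ) : ℕ∞) : WithBot ℕ∞) ≤ extPsup R M :=
  (le_sSup (a := (((i + 1 : ℕ) : ℕ∞) : WithBot ℕ∞))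
    ⟨i + 1, fun h' => h ((extVanishes_succ_iff i).1 h'), rfl⟩ : _ ≤ extP R M N).trans
    (le_sSup ⟨N, _, _, inferInstance, hN, rfl⟩)

/-- If `Ext^j(M, R) = 0` for `j > g` and `Ext^{i+1}(M, N) ≠ 0` for some `N ∈ M^⊥` and `i ≥ g`, then
dimension shifting along free covers of `N` produces modules in `M^⊥` with nonvanishing `Ext` in
arbitrarily high degrees. -/
lemma le_extPsup_of_not_ev [IsNoetherianRing R] {g : ℕ} (hM : ∀ i, g ≤ i → EV R M R (i + 1))
    (j : ℕ) : ∀ {N : Type v} [AddCommGroup N] [Module R N] [Module.Finite R N],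
      MemPerp R M N → ∀ {i : ℕ}, g ≤ i → ¬ EV R M N (i + 1) →
      (((i + j + 1 : ℕ) : ℕ∞) : WithBot ℕ∞) ≤ extPsup R M := by
  induction j with
  | zero => exact fun hN i _ h => le_extPsup hN h
  | succ j ih =>
    intro N _ _ _ hN i hi h
    obtain ⟨n, p, hp⟩ := Module.Finite.exists_fin' R N
    have hinj := (LinearMap.ker p).injective_subtype
    have hex := exact_ker_subtype p
    have hF : ∀ i, g ≤ i → EV R M (Fin n → R) (i + 1) := fun i hi => (hM i hi).pi_fin n
    have hK : MemPerp R M (LinearMap.ker p) := by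
      obtain ⟨d, hd⟩ := memPerp_iff.1 hN
      refine memPerp_iff.2 ⟨max d g + 1, fun i hi => ?_⟩
      obtain ⟨i, rfl⟩ := Nat.exists_eq_add_of_le' (show 1 ≤ i by omega)
      exact EV.cov₁ hinj hp hex (hd i (by omega)) (hF _ (by omega))
    have := ih hK (i := i + 1) (by omega) fun h' => h (EV.cov₃ hinj hp hex (hF i hi) h')
    rwa [show i + 1 + j + 1 = i + (j + 1) + 1 by omega] at this

lemma extPsup_le [IsNoetherianRing R] {g : ℕ} (hM : ∀ i, g ≤ i → EV R M R (i + 1))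
    (hfin : extPsup R M < ⊤) : extPsup R M ≤ ((g : ℕ∞) : WithBot ℕ∞) := by
  refine sSup_le ?_
  rintro _ ⟨N, _, _, _, hN, rfl⟩
  refine sSup_le ?_
  rintro _ ⟨n, hn, rfl⟩
  by_contra hlt
  have hlt' : g < n := by
    by_contra hle
    exact hlt (by exact_mod_cast (not_lt.1 hle))
  obtain ⟨i, rfl⟩ := Nat.exists_eq_add_of_le' (show 1 ≤ n by omega)
  have key := fun j => le_extPsup_of_not_ev hM j hN (i := i) (by omega)
    (fun h => hn ((extVanishes_succ_iff i).2 h))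
  cases hE : extPsup R M with
  | bot => rw [hE] at key; exact absurd (key 0) (not_le.2 (WithBot.bot_lt_coe _))
  | coe x =>
    rw [hE] at key hfin
    have hx : x < ⊤ := WithBot.coe_lt_coe.1 hfin
    obtain ⟨m, rfl⟩ := ENat.ne_top_iff_exists.1 hx.ne
    have : i + m + 1 ≤ m := by exact_mod_cast WithBot.coe_le_coe.1 (key m)
    omega

end ABDim

/-- Theorem 1.2(2)(i): if `M` is a nonzero finitely generated module of finite
AB-dimension, then `AB-dim_R M = depth R - depth_R M`. -/
theorem statement1 (R : Type u) [CommRing R] [IsLocalRing R] [IsNoetherianRing R]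
    (M : Type u) [AddCommGroup M] [Module R M] [Module.Finite R M] [Nontrivial M]
    (h : abdim R M < ⊤) :
    abdim R M = ((rdepth R R - rdepth R M : ℕ∞) : WithBot ℕ∞) := by
  have hg : gdim R M < ⊤ := WithBot.coe_lt_coe.1 ((le_max_left _ _).trans_lt h)
  have hex : ∃ n, GdimLE R n (ModuleCat.of R M) := by
    by_contra hne
    push Not at hne
    refine hg.ne (sInf_eq_top.2 ?_)
    rintro _ ⟨n, hn, rfl⟩
    exact (hne n hn).elim
  classical
  obtain ⟨n, hn, hmin⟩ : ∃ n, GdimLE R n (ModuleCat.of R M) ∧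
      ∀ m < n, ¬ GdimLE R m (ModuleCat.of R M) :=
    ⟨Nat.find hex, Nat.find_spec hex, fun m hm => Nat.find_min hex hm⟩
  have hgn : gdim R M = n := by
    refine le_antisymm (sInf_le ⟨n, hn, rfl⟩) (le_sInf ?_)
    rintro _ ⟨m, hm, rfl⟩
    exact_mod_cast not_lt.1 fun hlt => hmin m hlt hm
  have hP : extPsup R M ≤ ((n : ℕ∞) : WithBot ℕ∞) :=
    extPsup_le (GdimLE.ev hn) ((le_max_right _ _).trans_lt h)
  obtain ⟨d, hd⟩ := exists_depthEq (R := R)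
  obtain ⟨e, he, hed⟩ := auslander_bridger hd (M := ModuleCat.of R M) hn hmin
  have he' : DepthEq R M e := he
  rw [abdim, hgn, max_eq_left hP, hd.rdepth_eq, he'.rdepth_eq, ← hed]
  congr 1
  rw [← ENat.natCast_sub, Nat.add_sub_cancel_left]
end
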